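/- arXiv:math/0002103 — 2 statements merged into one kernel-verified Lean document; each statement's English description precedes it below -/
import Mathlib

section
/- Let A be a set of positive integers with gcd(A) = 1. If A has asymptotic density d(A) = α > 0, then log p_A(n) ~ c₀√(αn) as n → ∞, where c₀ = π√(2/3). -/
/-!
The proof goes through the generating function `P(s) = ∑ p_A(n) e^{-sn}`, which for `s > 0` equals
`exp Λ(s)` with `Λ(s) = ∑_{a ∈ A} -log (1 - e^{-sa})` (`generating_function`).

*Behaviour of `Λ` at `0`.* Expanding the logarithm gives `Λ(s) = ∑_{k ≥ 1} G(ks) / k`, where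
`G(s) = ∑_{a ∈ A} e^{-sa}` (`log_product_swap`). The density hypothesis yields `s G(s) → α` by an
Abelian argument (`abel_density`, `abel_exp`). As `0 ≤ s G(s) ≤ 1`, dominated convergence gives
`s Λ(s) = ∑ (ks G(ks)) / k² → α π² / 6 =: β` (`log_product_asymp`).

*Near-monotonicity.* Since `gcd A = 1`, every large integer is a sum of elements of `A`; adding a
fixed partition of `n - m` to the partitions of `m` shows `p_A(m) ≤ p_A(n)` as soon as `n - m` is
at least some constant `N₀` (`pA_quasi_mono`).

*Tauberian step* (`tauber`). The bound `p_A(n) ≤ e^{sn} P(s)` with `s = √(β / n)` gives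
`log p_A(n) ≤ (2 + o(1)) √(β n)`. Conversely, a Chernoff bound shows that for small `t` at least
half of the mass of `P(t)` comes from indices `m` within a factor `1 ± η` of `β / t²`
(`tail_small`, `lower_aux`). Choosing `t` so that `(1 + η) β / t²` is slightly below `n`, all those
`p_A(m)` are at most `p_A(n)`, whence `log p_A(n) ≥ (2 - o(1)) √(β n)`. Finally
`2 √β = π √(2/3) √α`.
-/

open Filter Asymptotics Real

/-- `pA A n` is the number of partitions of `n` all of whose parts lie in `A`. -/
noncomputable def pA (A : Set ℕ) (n : ℕ) : ℕ :=
  Nat.card {p : n.Partition // ∀ a ∈ p.parts, a ∈ A}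

/-- `countA A x` is the number of elements of `A` not exceeding `x`. -/
noncomputable def countA (A : Set ℕ) (x : ℝ) : ℕ :=
  {a : ℕ | a ∈ A ∧ (a : ℝ) ≤ x}.ncard

/-! ### The generating function -/

/-- `HasEval x f v`: the power series `f` has nonnegative coefficients and its evaluation at the
real number `x` converges to `v`. The convergence is automatically absolute in `ℝ`, which is what
Cauchy products need. -/
def HasEval (x : ℝ) (f : PowerSeries ℝ) (v : ℝ) : Prop :=
  (∀ n, 0 ≤ f.coeff n) ∧ HasSum (fun n => f.coeff n * x ^ n) v

theorem HasEval.one (x : ℝ) : HasEval x 1 1 := by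
  refine ⟨fun n => ?_, ?_⟩
  · rw [PowerSeries.coeff_one]; split_ifs <;> norm_num
  · have := hasSum_single (f := fun n => (1 : PowerSeries ℝ).coeff n * x ^ n) 0
      (fun n hn => by simp [PowerSeries.coeff_one, hn])
    simpa using this

theorem HasEval.mul {x : ℝ} {f g : PowerSeries ℝ} {u v : ℝ}
    (hf : HasEval x f u) (hg : HasEval x g v) : HasEval x (f * g) (u * v) := by
  refine ⟨fun n => ?_, ?_⟩
  · rw [PowerSeries.coeff_mul]
    exact Finset.sum_nonneg fun q _ => mul_nonneg (hf.1 _) (hg.1 _)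
  · have h1 : Summable fun n => ‖f.coeff n * x ^ n‖ := hf.2.summable.norm
    have h2 : Summable fun n => ‖g.coeff n * x ^ n‖ := hg.2.summable.norm
    have h3 := (summable_norm_sum_mul_antidiagonal_of_summable_norm h1 h2).of_norm.hasSum
    rw [← tsum_mul_tsum_eq_tsum_sum_antidiagonal_of_summable_norm h1 h2, hf.2.tsum_eq,
      hg.2.tsum_eq] at h3
    have e : (fun n => (f * g).coeff n * x ^ n) = fun n =>
        ∑ q ∈ Finset.HasAntidiagonal.antidiagonal n, f.coeff q.1 * x ^ q.1 * (g.coeff q.2 * x ^ q.2) := by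
      funext n
      rw [PowerSeries.coeff_mul, Finset.sum_mul]
      refine Finset.sum_congr rfl fun q hq => ?_
      rw [← Finset.HasAntidiagonal.mem_antidiagonal.1 hq, pow_add]
      ring
    rw [e]
    exact h3

open scoped PowerSeries.WithPiTopology in
/-- The series `1 + X^(i+1) + X^(2(i+1)) + ⋯` of a single part `i + 1` evaluates to
`1 / (1 - x^(i+1))`. -/
theorem HasEval.geometric {x : ℝ} (hx : 0 ≤ x) (hx1 : x < 1) (i : ℕ) :
    HasEval x (∑' j : ℕ, (PowerSeries.X : PowerSeries ℝ) ^ ((i + 1) * j)) (1 - x ^ (i + 1))⁻¹ := by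
  have hs : Summable fun j : ℕ => (PowerSeries.X : PowerSeries ℝ) ^ ((i + 1) * j) := by
    simp_rw [pow_mul]
    exact PowerSeries.WithPiTopology.summable_pow_of_constantCoeff_eq_zero (by simp)
  have hc : ∀ n, (∑' j : ℕ, (PowerSeries.X : PowerSeries ℝ) ^ ((i + 1) * j)).coeff n
      = ∑' j : ℕ, if n = (i + 1) * j then (1 : ℝ) else 0 := by
    intro n
    rw [hs.map_tsum _ (PowerSeries.WithPiTopology.continuous_coeff ℝ n)]
    simp_rw [PowerSeries.coeff_X_pow]
  refine ⟨fun n => ?_, ?_⟩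
  · rw [hc]
    exact tsum_nonneg fun j => by split_ifs <;> norm_num
  · have hinj : Function.Injective fun j : ℕ => (i + 1) * j :=
      fun a b hab => Nat.eq_of_mul_eq_mul_left (Nat.succ_pos i) hab
    rw [← hinj.hasSum_iff]
    · have hg := hasSum_geometric_of_lt_one (pow_nonneg hx (i + 1))
        (pow_lt_one₀ hx hx1 (Nat.succ_ne_zero i))
      convert hg using 2 with j
      simp only [Function.comp, hc]
      rw [pow_mul, tsum_eq_single j]
      · simp
      · intro b hb
        rw [if_neg]
        exact fun hh => hb (hinj hh).symm
    · intro n hn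
      rw [hc]
      have : ∀ j : ℕ, (if n = (i + 1) * j then (1 : ℝ) else 0) = 0 := fun j =>
        if_neg fun hh => hn ⟨j, hh.symm⟩
      simp [this]

theorem pA_eq_card (A : Set ℕ) [DecidablePred (· ∈ A)] (n : ℕ) :
    pA A n = (Nat.Partition.restricted n (· ∈ A)).card := by
  rw [pA, Nat.Partition.restricted, Nat.card_eq_fintype_card, Fintype.card_subtype]

open Classical in
/-- Generating function of the partitions with parts in `A ∩ [1, N]`, obtained by evaluating
Mathlib's formal product, which is finite here. The factor of index `i` belongs to the part
`i + 1`. -/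
theorem finite_product (A : Set ℕ) {x : ℝ} (hx : 0 ≤ x) (hx1 : x < 1) (N : ℕ) :
    HasSum (fun n => (pA {a | a ∈ A ∧ a ≤ N} n : ℝ) * x ^ n)
      (∏ i ∈ Finset.range N, if i + 1 ∈ A then (1 - x ^ (i + 1))⁻¹ else 1) := by
  let _ : TopologicalSpace (PowerSeries ℝ) := PowerSeries.WithPiTopology.instTopologicalSpace ℝ
  have _ : T2Space (PowerSeries ℝ) := PowerSeries.WithPiTopology.instT2Space ℝ
  have h1 := Nat.Partition.hasProd_powerSeriesMk_card_restricted ℝ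
    (· ∈ {a | a ∈ A ∧ a ≤ N})
  have h2 := hasProd_prod_of_ne_finset_one (L := SummationFilter.unconditional ℕ) (f := fun i : ℕ =>
    if i + 1 ∈ {a | a ∈ A ∧ a ≤ N} then
      ∑' j : ℕ, (PowerSeries.X : PowerSeries ℝ) ^ ((i + 1) * j) else 1)
    (s := Finset.range N) (by
      intro b hb
      rw [if_neg]
      rintro ⟨-, hb'⟩
      exact hb (Finset.mem_range.2 hb'))
  have h3 := h1.unique h2
  have h4 : HasEval x (∏ i ∈ Finset.range N, if i + 1 ∈ {a | a ∈ A ∧ a ≤ N} then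
      ∑' j : ℕ, (PowerSeries.X : PowerSeries ℝ) ^ ((i + 1) * j) else 1)
      (∏ i ∈ Finset.range N, if i + 1 ∈ A then (1 - x ^ (i + 1))⁻¹ else 1) := by
    -- Partial products: the truncation level `N` in the condition stays fixed while `M` grows.
    have : ∀ M ≤ N, HasEval x (∏ i ∈ Finset.range M, if i + 1 ∈ {a | a ∈ A ∧ a ≤ N} then
      ∑' j : ℕ, (PowerSeries.X : PowerSeries ℝ) ^ ((i + 1) * j) else 1)
      (∏ i ∈ Finset.range M, if i + 1 ∈ A then (1 - x ^ (i + 1))⁻¹ else 1) := by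
      intro M
      induction M with
      | zero => intro _; simpa using HasEval.one x
      | succ M ih =>
        intro hM
        rw [Finset.prod_range_succ, Finset.prod_range_succ]
        refine (ih (by omega)).mul ?_
        by_cases hA : M + 1 ∈ A
        · rw [if_pos ⟨hA, hM⟩, if_pos hA]
          exact HasEval.geometric hx hx1 M
        · rw [if_neg (fun hh => hA hh.1), if_neg hA]
          exact HasEval.one x
    exact this N le_rfl
  rw [← h3] at h4
  convert h4.2 using 2 with n
  rw [PowerSeries.coeff_mk, pA_eq_card]

/-- Parts larger than `N ≥ n` cannot occur in a partition of `n`. -/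
theorem pA_trunc (A : Set ℕ) {n N : ℕ} (h : n ≤ N) : pA {a | a ∈ A ∧ a ≤ N} n = pA A n := by
  unfold pA
  refine Nat.card_congr (Equiv.subtypeEquivRight fun p => ?_)
  refine forall₂_congr fun a ha => ⟨fun hh => hh.1, fun hh => ⟨hh, ?_⟩⟩
  have := Multiset.single_le_sum (fun _ _ => Nat.zero_le _) a ha
  rw [p.parts_sum] at this
  omega

theorem pA_mono_set {A B : Set ℕ} (h : A ⊆ B) (n : ℕ) : pA A n ≤ pA B n := by
  unfold pA
  exact Nat.card_le_card_of_injective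
    (fun p => (⟨p.1, fun a ha => h (p.2 a ha)⟩ : {p : n.Partition // ∀ a ∈ p.parts, a ∈ B}))
    (fun p q hpq => Subtype.ext (congrArg
      (fun r : {p : n.Partition // ∀ a ∈ p.parts, a ∈ B} => r.1) hpq))

/-- The product formula `∑ p_A(n) x^n = ∏_{a ∈ A} (1 - x^a)⁻¹` for `0 < x < 1`, with the product
written as the exponential of a sum of logarithms. Both inequalities follow from the formula for
`A ∩ [1, N]` by letting `N` tend to infinity. -/
theorem generating_function (A : Set ℕ) (hA : ∀ a ∈ A, 0 < a) {x : ℝ} (hx : 0 < x) (hx1 : x < 1)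
    (hL : Summable fun n => A.indicator 1 n * -log (1 - x ^ n)) :
    HasSum (fun n => (pA A n : ℝ) * x ^ n)
      (exp (∑' n, A.indicator 1 n * -log (1 - x ^ n))) := by
  classical
  set l : ℕ → ℝ := fun n => A.indicator 1 n * -log (1 - x ^ n) with hl
  have hl0 : ∀ n, 0 ≤ l n := by
    intro n
    refine mul_nonneg (Set.indicator_nonneg (fun _ _ => zero_le_one) n) ?_
    have h1 : x ^ n ≤ 1 := pow_le_one₀ hx.le hx1.le
    have h2 : 0 < x ^ n := by positivity
    have := log_nonpos (x := 1 - x ^ n) (by linarith) (by linarith)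
    linarith
  have hprod : ∀ N, (∏ i ∈ Finset.range N, if i + 1 ∈ A then (1 - x ^ (i + 1))⁻¹ else 1)
      = exp (∑ n ∈ Finset.range (N + 1), l n) := by
    intro N
    -- The term at `0` would involve `log 0`; it vanishes because `0 ∉ A`.
    have hl00 : l 0 = 0 := by
      have : 0 ∉ A := fun h => (hA 0 h).false
      simp [hl, this]
    rw [Finset.sum_range_succ', hl00, add_zero, exp_sum]
    refine Finset.prod_congr rfl fun i _ => ?_
    by_cases hi : i + 1 ∈ A
    · have : 0 < 1 - x ^ (i + 1) := by
        have := pow_lt_one₀ hx.le hx1 (i.add_one_ne_zero)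
        linarith
      simp [hl, hi, exp_neg, exp_log this]
    · simp [hl, hi]
  have hfin : ∀ N, HasSum (fun n => (pA {a | a ∈ A ∧ a ≤ N} n : ℝ) * x ^ n)
      (exp (∑ n ∈ Finset.range (N + 1), l n)) := by
    intro N
    rw [← hprod]
    exact finite_product A hx.le hx1 N
  have hnn : ∀ n, 0 ≤ (pA A n : ℝ) * x ^ n := fun n => by positivity
  have hpart : ∀ N, ∑ n ∈ Finset.range N, (pA A n : ℝ) * x ^ n ≤ exp (∑' n, l n) := by
    intro N
    have h1 : ∑ n ∈ Finset.range N, (pA A n : ℝ) * x ^ n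
        = ∑ n ∈ Finset.range N, (pA {a | a ∈ A ∧ a ≤ N} n : ℝ) * x ^ n := by
      refine Finset.sum_congr rfl fun n hn => ?_
      rw [pA_trunc A (Finset.mem_range.1 hn).le]
    rw [h1]
    refine (sum_le_hasSum _ (fun n _ => by positivity) (hfin N)).trans ?_
    exact exp_le_exp.2 (hL.sum_le_tsum _ fun n _ => hl0 n)
  have hsum : Summable fun n => (pA A n : ℝ) * x ^ n := summable_of_sum_range_le hnn hpart
  have hle : ∑' n, (pA A n : ℝ) * x ^ n ≤ exp (∑' n, l n) :=
    hsum.tsum_le_of_sum_range_le hpart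
  have hge : exp (∑' n, l n) ≤ ∑' n, (pA A n : ℝ) * x ^ n := by
    have ht : Tendsto (fun N => exp (∑ n ∈ Finset.range (N + 1), l n)) atTop
        (nhds (exp (∑' n, l n))) :=
      (continuous_exp.tendsto _).comp
        (hL.hasSum.tendsto_sum_nat.comp (tendsto_add_atTop_nat 1))
    refine le_of_tendsto' ht fun N => ?_
    refine hasSum_le (fun n => ?_) (hfin N) hsum.hasSum
    have : pA {a | a ∈ A ∧ a ≤ N} n ≤ pA A n := pA_mono_set (fun a ha => ha.1) n
    gcongr
  rw [← le_antisymm hle hge]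
  exact hsum.hasSum

/-! ### Near-monotonicity of `pA` -/

theorem pA_zero (A : Set ℕ) : pA A 0 = 1 := by
  unfold pA
  rw [Nat.card_eq_one_iff_unique]
  refine ⟨⟨fun a b => Subtype.ext (Subsingleton.elim _ _)⟩, ⟨⟨default, ?_⟩⟩⟩
  intro a ha
  have := Multiset.single_le_sum (fun _ _ => Nat.zero_le _) a ha
  have h2 := (default : Nat.Partition 0).parts_pos ha
  rw [(default : Nat.Partition 0).parts_sum] at this
  omega

/-- `p_A(m) ≤ p_A(n)` when `n - m` is large: then `n - m` is a sum of elements of `A`, and appending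
these summands maps the partitions of `m` injectively to those of `n`. -/
theorem pA_quasi_mono (A : Set ℕ) (hA : ∀ a ∈ A, 0 < a)
    (hgcd : ∀ d : ℕ, (∀ a ∈ A, d ∣ a) → d = 1) :
    ∃ N0, ∀ m n, m + N0 ≤ n → pA A m ≤ pA A n := by
  obtain ⟨N0, hN0⟩ := Nat.exists_mem_closure_of_ge A
  have hg : Nat.setGcd A = 1 := hgcd _ fun a ha => Nat.setGcd_dvd_of_mem ha
  refine ⟨N0, fun m n hmn => ?_⟩
  obtain ⟨μ, hμA, hμ⟩ := AddSubmonoid.exists_multiset_of_mem_closure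
    (hN0 (n - m) (by omega) (by simp [hg]))
  unfold pA
  refine Nat.card_le_card_of_injective
    (fun p => (⟨⟨p.1.parts + μ, ?_, ?_⟩, ?_⟩ : {p : n.Partition // ∀ a ∈ p.parts, a ∈ A})) ?_
  · intro i hi
    rcases Multiset.mem_add.1 hi with h | h
    · exact p.1.parts_pos h
    · exact hA i (hμA i h)
  · rw [Multiset.sum_add, p.1.parts_sum, hμ]; omega
  · intro a ha
    rcases Multiset.mem_add.1 ha with h | h
    · exact p.2 a h
    · exact hμA a h
  · intro p q hpq
    have h1 : p.1.parts + μ = q.1.parts + μ :=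
      congrArg (fun r : {p : n.Partition // ∀ a ∈ p.parts, a ∈ A} => r.1.parts) hpq
    exact Subtype.ext (Nat.Partition.ext (add_right_cancel h1))

theorem sum_indicator_eq_countA (A : Set ℕ) (n : ℕ) :
    ∑ k ∈ Finset.range (n + 1), A.indicator (1 : ℕ → ℝ) k = countA A n := by
  classical
  unfold countA
  have : {a : ℕ | a ∈ A ∧ (a : ℝ) ≤ n} = ((Finset.range (n + 1)).filter (· ∈ A) : Finset ℕ) := by
    ext a
    simp [and_comm]
  rw [this, Set.ncard_coe_finset, Finset.card_filter]
  push_cast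
  refine Finset.sum_congr rfl fun k _ => ?_
  simp [Set.indicator_apply]

/-! ### Asymptotics of the logarithm of the generating function -/

/-- Abelian theorem: if the averages of a sequence `a` in `[0, 1]` tend to `α`, then
`(1 - x) ∑ a n x^n → α` as `x → 1⁻`. With `C n` the partial sums, `∑ C n x^n` is `(1 - x)⁻¹` times
the series, and `C n = α n + o(n)` is compared with `∑ n x^n = x / (1 - x)²`. -/
theorem abel_density {a : ℕ → ℝ} (ha0 : ∀ n, 0 ≤ a n) (ha1 : ∀ n, a n ≤ 1) {α : ℝ}
    (h : Tendsto (fun n : ℕ => (∑ k ∈ Finset.range (n + 1), a k) / n) atTop (nhds α)) :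
    Tendsto (fun x : ℝ => (1 - x) * ∑' n, a n * x ^ n) (nhdsWithin 1 (Set.Iio 1)) (nhds α) := by
  set C : ℕ → ℝ := fun n => ∑ k ∈ Finset.range (n + 1), a k with hC
  have hid : ∀ x : ℝ, 0 < x → x < 1 →
      HasSum (fun n => C n * x ^ n) ((∑' n, a n * x ^ n) * (1 - x)⁻¹) := by
    intro x hx hx1
    have hg : Summable fun n : ℕ => ‖x ^ n‖ := by
      simpa [abs_of_pos hx] using summable_geometric_of_lt_one hx.le hx1
    have hs : Summable fun n : ℕ => ‖a n * x ^ n‖ := by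
      refine hg.of_nonneg_of_le (fun _ => norm_nonneg _) fun n => ?_
      rw [norm_mul, norm_of_nonneg (ha0 n)]
      exact mul_le_of_le_one_left (norm_nonneg _) (ha1 n)
    have h1 := tsum_mul_tsum_eq_tsum_sum_range_of_summable_norm hs hg
    have h2 := (summable_norm_sum_mul_range_of_summable_norm hs hg).of_norm.hasSum
    rw [← h1, tsum_geometric_of_lt_one hx.le hx1] at h2
    have e : (fun n => C n * x ^ n)
        = fun n => ∑ k ∈ Finset.range (n + 1), a k * x ^ k * x ^ (n - k) := by
      funext n
      rw [hC, Finset.sum_mul]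
      refine Finset.sum_congr rfl fun k hk => ?_
      rw [mul_assoc, ← pow_add, Nat.add_sub_cancel' (Nat.lt_succ_iff.1 (Finset.mem_range.1 hk))]
    rw [e]
    exact h2
  rw [Metric.tendsto_nhds]
  intro ε hε
  obtain ⟨N, hN⟩ := (eventually_atTop.1 ((Metric.tendsto_nhds.1 h) (ε / 2) (half_pos hε)))
  -- `K` absorbs the finitely many initial indices.
  obtain ⟨K, hK⟩ : ∃ K : ℝ, ∀ n, |C n - α * n| ≤ ε / 2 * n + K := by
    refine ⟨∑ n ∈ Finset.range (N + 1), |C n - α * n|, fun n => ?_⟩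
    rcases lt_or_ge n (N + 1) with hn | hn
    · have := Finset.single_le_sum (f := fun n : ℕ => |C n - α * n|)
        (fun _ _ => abs_nonneg _) (Finset.mem_range.2 hn)
      have h2 : 0 ≤ ε / 2 * n := by positivity
      linarith
    · have h1 := hN n (by omega)
      have hn0 : (0 : ℝ) < n := by exact_mod_cast (by omega : 0 < n)
      rw [Real.dist_eq] at h1
      have h2 : C n - α * n = (C n / n - α) * n := by field_simp
      have h3 : 0 ≤ ∑ n ∈ Finset.range (N + 1), |C n - α * n| :=
        Finset.sum_nonneg fun _ _ => abs_nonneg _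
      rw [h2, abs_mul, abs_of_pos hn0]
      have := mul_le_mul_of_nonneg_right h1.le hn0.le
      linarith
  have hbd : ∀ x : ℝ, 0 < x → x < 1 →
      |(1 - x) * ∑' n, a n * x ^ n - α * x| ≤ ε / 2 * x + K * (1 - x) := by
    intro x hx hx1
    have hx1' : 0 < 1 - x := by linarith
    have hn := hasSum_coe_mul_geometric_of_norm_lt_one (r := x)
      (by rw [norm_of_nonneg hx.le]; exact hx1)
    have hg := hasSum_geometric_of_lt_one hx.le hx1
    have hd := (hid x hx hx1).sub (hn.mul_left α)
    have hu := (hn.mul_left (ε / 2)).add (hg.mul_left K)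
    have hle : ∀ n : ℕ, |C n * x ^ n - α * (n * x ^ n)|
        ≤ ε / 2 * (n * x ^ n) + K * x ^ n := by
      intro n
      have e : C n * x ^ n - α * (n * x ^ n) = (C n - α * n) * x ^ n := by ring
      rw [e, abs_mul, abs_of_pos (pow_pos hx n)]
      have := mul_le_mul_of_nonneg_right (hK n) (pow_pos hx n).le
      linarith
    have h1 := hasSum_le (fun n => (abs_le.1 (hle n)).2) hd hu
    have h2 := hasSum_le (fun n => (abs_le.1 (hle n)).1) hu.neg hd
    have h3 : |(∑' n, a n * x ^ n) * (1 - x)⁻¹ - α * (x / (1 - x) ^ 2)|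
        ≤ ε / 2 * (x / (1 - x) ^ 2) + K * (1 - x)⁻¹ := abs_le.2 ⟨h2, h1⟩
    have e : (1 - x) * ∑' n, a n * x ^ n - α * x
      = ((∑' n, a n * x ^ n) * (1 - x)⁻¹ - α * (x / (1 - x) ^ 2)) * (1 - x) ^ 2 := by
      field_simp
    rw [e, abs_mul, abs_of_pos (pow_pos hx1' 2)]
    refine (mul_le_mul_of_nonneg_right h3 (pow_pos hx1' 2).le).trans (le_of_eq ?_)
    field_simp
  have hlim : Tendsto (fun x : ℝ => ε / 2 * x + K * (1 - x) + |α| * (1 - x))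
      (nhdsWithin 1 (Set.Iio 1)) (nhds (ε / 2)) := by
    have : Continuous (fun x : ℝ => ε / 2 * x + K * (1 - x) + |α| * (1 - x)) := by fun_prop
    have h := this.tendsto 1
    simp only [mul_one, sub_self, mul_zero, add_zero] at h
    exact h.mono_left nhdsWithin_le_nhds
  filter_upwards [hlim.eventually_lt_const (half_lt_self hε),
    Ioo_mem_nhdsLT (show (0 : ℝ) < 1 by norm_num)] with x h1 h2
  have h3 := hbd x h2.1 h2.2
  rw [Real.dist_eq]
  have e : (1 - x) * ∑' n, a n * x ^ n - α
    = ((1 - x) * ∑' n, a n * x ^ n - α * x) + -(α * (1 - x)) := by ring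
  rw [e]
  refine (abs_add_le _ _).trans_lt ?_
  rw [abs_neg, abs_mul, abs_of_pos (by linarith [h2.2] : 0 < 1 - x)]
  linarith

/-- The Abelian theorem in the variable `x = e^{-s}`, using `s / (1 - e^{-s}) → 1`. -/
theorem abel_exp {a : ℕ → ℝ} (ha0 : ∀ n, 0 ≤ a n) (ha1 : ∀ n, a n ≤ 1) {α : ℝ}
    (h : Tendsto (fun n : ℕ => (∑ k ∈ Finset.range (n + 1), a k) / n) atTop (nhds α)) :
    Tendsto (fun s : ℝ => s * ∑' n, a n * exp (-s) ^ n) (nhdsWithin 0 (Set.Ioi 0)) (nhds α) := by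
  have hx : Tendsto (fun s : ℝ => exp (-s)) (nhdsWithin 0 (Set.Ioi 0))
      (nhdsWithin 1 (Set.Iio 1)) := by
    refine tendsto_nhdsWithin_iff.2 ⟨?_, ?_⟩
    · have : Continuous (fun s : ℝ => exp (-s)) := by fun_prop
      have h := this.tendsto 0
      simp only [neg_zero, exp_zero] at h
      exact h.mono_left nhdsWithin_le_nhds
    · filter_upwards [self_mem_nhdsWithin] with s hs
      have hs : 0 < s := hs
      simpa using hs
  have h1 := (abel_density ha0 ha1 h).comp hx
  have hq : Tendsto (fun s : ℝ => s / (1 - exp (-s))) (nhdsWithin 0 (Set.Ioi 0)) (nhds 1) := by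
    have hd : HasDerivAt (fun s : ℝ => 1 - exp (-s)) 1 0 := by
      have := ((hasDerivAt_id (0 : ℝ)).neg.exp).const_sub 1
      simpa using this
    have h2 := (hasDerivAt_iff_tendsto_slope.1 hd).mono_left
      (nhdsWithin_mono (0 : ℝ) (fun x (hx : x ∈ Set.Ioi 0) => (ne_of_gt hx : x ≠ 0)))
    have h3 := h2.inv₀ one_ne_zero
    rw [inv_one] at h3
    refine h3.congr fun s => ?_
    simp [slope_def_field]
  have h2 := hq.mul h1
  rw [one_mul] at h2
  refine h2.congr' ?_
  filter_upwards [self_mem_nhdsWithin] with s hs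
  have hs : 0 < s := hs
  have : 0 < 1 - exp (-s) := by simpa using hs
  simp only [Function.comp]
  field_simp

/-- Expanding `-log (1 - x^n) = ∑ x^{n(k+1)} / (k+1)` and exchanging the two sums. The hypothesis
`a 0 = 0` removes the term `n = 0`, where the expansion fails. -/
theorem log_product_swap {a : ℕ → ℝ} (ha0 : ∀ n, 0 ≤ a n) (ha1 : ∀ n, a n ≤ 1) (h0 : a 0 = 0)
    {x : ℝ} (hx : 0 < x) (hx1 : x < 1) :
    HasSum (fun n => a n * -log (1 - x ^ n))
      (∑' k : ℕ, (∑' n, a n * (x ^ (k + 1)) ^ n) / (k + 1)) := by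
  have hF : Summable (fun q : ℕ × ℕ => a q.1 * (x ^ (q.2 + 1)) ^ q.1 / (q.2 + 1)) := by
    have hg := summable_geometric_of_lt_one hx.le hx1
    refine (hg.mul_of_nonneg hg (fun _ => by positivity) (fun _ => by positivity)).of_nonneg_of_le
      (fun q => ?_) (fun q => ?_)
    · have := ha0 q.1
      positivity
    · obtain ⟨i, k⟩ := q
      simp only
      rcases Nat.eq_zero_or_pos i with rfl | hi
      · rw [h0]; simp; positivity
      · rw [← pow_add, ← pow_mul]
        have h1 : x ^ ((k + 1) * i) ≤ x ^ (i + k) :=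
          -- `(k + 1) * i ≥ i + k` for `i ≥ 1`, so a product of geometric series dominates.
          pow_le_pow_of_le_one hx.le hx1.le (by nlinarith)
        have h2 : a i * x ^ ((k + 1) * i) ≤ x ^ ((k + 1) * i) :=
          mul_le_of_le_one_left (by positivity) (ha1 i)
        have h3 : a i * x ^ ((k + 1) * i) / (k + 1) ≤ a i * x ^ ((k + 1) * i) :=
          div_le_self (mul_nonneg (ha0 i) (by positivity)) (by linarith [k.cast_nonneg (α := ℝ)])
        linarith
  have hrow : ∀ i, HasSum (fun k : ℕ => a i * (x ^ (k + 1)) ^ i / (k + 1))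
      (a i * -log (1 - x ^ i)) := by
    intro i
    rcases Nat.eq_zero_or_pos i with rfl | hi
    · simp [h0, hasSum_zero]
    · have hxi : |x ^ i| < 1 := by
        rw [abs_of_pos (by positivity)]
        exact pow_lt_one₀ hx.le hx1 hi.ne'
      have hk := (hasSum_pow_div_log_of_abs_lt_one hxi).mul_left (a i)
      have e : (fun k : ℕ => a i * (x ^ (k + 1)) ^ i / (k + 1))
          = fun k : ℕ => a i * ((x ^ i) ^ (k + 1) / (k + 1)) := by
        funext k
        rw [← pow_mul, ← pow_mul, mul_comm i, mul_div_assoc]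
      rw [e]
      exact hk
  have h1 := hF.hasSum.prod_fiberwise hrow
  have e : ∑' q : ℕ × ℕ, a q.1 * (x ^ (q.2 + 1)) ^ q.1 / ((q.2 : ℝ) + 1)
      = ∑' k : ℕ, (∑' n, a n * (x ^ (k + 1)) ^ n) / ((k : ℝ) + 1) := by
    rw [hF.tsum_prod]
    have hc := Summable.tsum_comm (f := fun (i k : ℕ) => a i * (x ^ (k + 1)) ^ i / ((k : ℝ) + 1))
      hF
    rw [← hc]
    exact tsum_congr fun k => tsum_div_const
  rw [← e]
  exact h1

/-- `s Λ(s) → α π² / 6`: after exchanging the sums, `s Λ(s) = ∑ H((k+1)s) / (k+1)²` with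
`H(s) = s ∑ a n e^{-sn}`, which tends to `α` and is bounded by `1`. -/
theorem log_product_asymp {a : ℕ → ℝ} (ha0 : ∀ n, 0 ≤ a n) (ha1 : ∀ n, a n ≤ 1) (h0 : a 0 = 0)
    {α : ℝ}
    (h : Tendsto (fun n : ℕ => (∑ k ∈ Finset.range (n + 1), a k) / n) atTop (nhds α)) :
    Tendsto (fun s : ℝ => s * ∑' n, a n * -log (1 - exp (-s) ^ n))
      (nhdsWithin 0 (Set.Ioi 0)) (nhds (α * (π ^ 2 / 6))) := by
  have hz : HasSum (fun k : ℕ => 1 / ((k : ℝ) + 1) ^ 2) (π ^ 2 / 6) := by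
    have := (hasSum_nat_add_iff' 1).2 hasSum_zeta_two
    simpa using this
  set H : ℝ → ℝ := fun s => s * ∑' n, a n * exp (-s) ^ n with hH
  have hHb : ∀ s, 0 < s → |H s| ≤ 1 := by
    intro s hs
    have hx : 0 < exp (-s) := exp_pos _
    have hx1 : exp (-s) < 1 := by simpa using hs
    have hg := (hasSum_geometric_of_lt_one hx.le hx1).mul_left (exp (-s))
    have hs0 : 0 ≤ ∑' n, a n * exp (-s) ^ n :=
      tsum_nonneg fun n => mul_nonneg (ha0 n) (by positivity)
    have hsum : Summable (fun n => a n * exp (-s) ^ n) :=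
      (summable_geometric_of_lt_one hx.le hx1).of_nonneg_of_le
        (fun n => mul_nonneg (ha0 n) (by positivity))
        (fun n => mul_le_of_le_one_left (by positivity) (ha1 n))
    have hle : ∑' n, a n * exp (-s) ^ n ≤ exp (-s) * (1 - exp (-s))⁻¹ := by
      rw [hsum.tsum_eq_zero_add, h0, zero_mul, zero_add]
      refine hasSum_le (fun n => ?_) ((summable_nat_add_iff 1).2 hsum).hasSum hg
      rw [pow_succ']
      exact mul_le_of_le_one_left (by positivity) (ha1 _)
    rw [hH, abs_of_nonneg (mul_nonneg hs.le hs0)]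
    refine (mul_le_mul_of_nonneg_left hle hs.le).trans ?_
    have h1 : 0 < 1 - exp (-s) := by linarith
    rw [← mul_assoc, ← div_eq_mul_inv, div_le_one h1]
    -- `s e^{-s} ≤ 1 - e^{-s}` is `1 + s ≤ e^s` in disguise.
    have h2 : (s + 1) * exp (-s) ≤ 1 := by
      have := mul_le_mul_of_nonneg_right (add_one_le_exp s) hx.le
      rwa [← exp_add, add_neg_cancel, exp_zero] at this
    linarith
  have hH0 : Tendsto H (nhdsWithin 0 (Set.Ioi 0)) (nhds α) := abel_exp ha0 ha1 h
  have hdom : Tendsto (fun s : ℝ => ∑' k : ℕ, H ((k + 1) * s) * (1 / ((k : ℝ) + 1) ^ 2))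
      (nhdsWithin 0 (Set.Ioi 0)) (nhds (∑' k : ℕ, α * (1 / ((k : ℝ) + 1) ^ 2))) := by
    refine tendsto_tsum_of_dominated_convergence hz.summable (fun k => ?_) ?_
    · have hk : (0 : ℝ) < k + 1 := by positivity
      have hks : Tendsto (fun s : ℝ => (k + 1) * s) (nhdsWithin 0 (Set.Ioi 0))
          (nhdsWithin 0 (Set.Ioi 0)) := by
        refine tendsto_nhdsWithin_iff.2 ⟨?_, ?_⟩
        · have : Continuous (fun t : ℝ => ((k : ℝ) + 1) * t) := by fun_prop
          have h := this.tendsto 0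
          rw [mul_zero] at h
          exact h.mono_left nhdsWithin_le_nhds
        · filter_upwards [self_mem_nhdsWithin] with t ht
          exact mul_pos hk ht
      exact (hH0.comp hks).mul_const _
    · filter_upwards [self_mem_nhdsWithin] with s hs k
      have hs : 0 < s := hs
      rw [norm_mul, Real.norm_eq_abs, norm_of_nonneg (by positivity)]
      exact mul_le_of_le_one_left (by positivity) (hHb _ (by positivity))
  rw [tsum_mul_left, hz.tsum_eq] at hdom
  refine hdom.congr' ?_
  filter_upwards [self_mem_nhdsWithin] with s hs
  have hs : 0 < s := hs
  have hx1 : exp (-s) < 1 := by simpa using hs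
  rw [(log_product_swap ha0 ha1 h0 (exp_pos _) hx1).tsum_eq, ← tsum_mul_left]
  refine tsum_congr fun k => ?_
  have e : exp (-((k + 1) * s)) = exp (-s) ^ (k + 1) := by
    rw [← exp_nat_mul]; push_cast; ring_nf
  simp only [hH, e]
  field_simp

/-! ### The Tauberian step -/

/-- The exponent estimate behind the Chernoff bounds. To leading order the logarithm of the quotient
of the two sides is `β ((r - 1) (κ - 1/r)) / t`, which tends to `-∞`. The left side bounds the mass
of `∑ p n e^{-tn}` beyond `κ β / t²`: above it when `r < 1`, below it when `r > 1`. -/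
theorem tail_small {Λ : ℝ → ℝ} {β : ℝ} (hβ : 0 < β)
    (hΛ : Tendsto (fun s => s * Λ s) (nhdsWithin 0 (Set.Ioi 0)) (nhds β))
    {r κ : ℝ} (hr : 0 < r) (hrκ : (r - 1) * (κ - 1 / r) < 0) :
    ∀ᶠ t in nhdsWithin (0 : ℝ) (Set.Ioi 0),
      exp ((r - 1) * κ * β / t) * exp (Λ (r * t)) ≤ 1 / 4 * exp (Λ t) := by
  have hrt : Tendsto (fun t : ℝ => r * t) (nhdsWithin 0 (Set.Ioi 0))
      (nhdsWithin 0 (Set.Ioi 0)) := by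
    refine tendsto_nhdsWithin_iff.2 ⟨?_, ?_⟩
    · have : Tendsto (fun t : ℝ => r * t) (nhds 0) (nhds (r * 0)) :=
        (continuous_const.mul continuous_id).tendsto 0
      rw [mul_zero] at this
      exact this.mono_left nhdsWithin_le_nhds
    · filter_upwards [self_mem_nhdsWithin] with t ht
      exact mul_pos hr ht
  have h1 : Tendsto (fun t => (r - 1) * κ * β + (r * t * Λ (r * t)) / r - t * Λ t)
      (nhdsWithin 0 (Set.Ioi 0)) (nhds ((r - 1) * κ * β + β / r - β)) :=
    ((tendsto_const_nhds).add ((hΛ.comp hrt).div_const r)).sub hΛ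
  have hneg : (r - 1) * κ * β + β / r - β < 0 := by
    have : (r - 1) * κ * β + β / r - β = β * ((r - 1) * (κ - 1 / r)) := by
      field_simp; ring
    rw [this]
    exact mul_neg_of_pos_of_neg hβ hrκ
  have h2 := (h1.neg_mul_atTop hneg tendsto_inv_nhdsGT_zero)
  have h3 := h2.eventually (eventually_le_atBot (log (1 / 4)))
  filter_upwards [h3, self_mem_nhdsWithin] with t ht ht0
  have ht0 : 0 < t := ht0
  rw [← exp_add, show (1 / 4 : ℝ) = exp (log (1 / 4)) by rw [exp_log]; norm_num, ← exp_add]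
  apply exp_le_exp.2
  have : ((r - 1) * κ * β + (r * t * Λ (r * t)) / r - t * Λ t) * t⁻¹
      = (r - 1) * κ * β / t + Λ (r * t) - Λ t := by
    field_simp
  linarith

/-- Lower bound for `log (p n)` when `n` exceeds `(1 + η) β / t²` by at least `N0`. Outside the window
`[(1 - η) β / t², (1 + η) β / t²]` the terms `p m e^{-tm}` carry at most half of the total mass
`exp (Λ t)`; inside it, `p m ≤ p n` and `e^{-tm} ≤ e^{-(1 - η) β / t}`. -/
theorem lower_aux {p : ℕ → ℝ} {Λ : ℝ → ℝ} {β : ℝ} {N0 : ℕ} (hβ : 0 < β)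
    (hp0 : ∀ n, 0 ≤ p n) (hp1 : ∀ n, N0 ≤ n → 1 ≤ p n)
    (hmono : ∀ m n, m + N0 ≤ n → p m ≤ p n)
    (hP : ∀ s, 0 < s → HasSum (fun n : ℕ => p n * exp (-s * n)) (exp (Λ s)))
    (hΛ : Tendsto (fun s => s * Λ s) (nhdsWithin 0 (Set.Ioi 0)) (nhds β))
    {η : ℝ} (hη : 0 < η) (hη1 : η < 1) :
    ∀ᶠ t in nhdsWithin (0 : ℝ) (Set.Ioi 0), ∀ n : ℕ, (1 + η) * β / t ^ 2 + N0 ≤ n →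
      Λ t + (1 - η) * β / t - log 2 - log (n + 1) ≤ log (p n) := by
  -- `r1` has to lie strictly between `1 / (1 + η)` and `1`.
  have e1 := tail_small (r := 1 / (1 + η / 2)) (κ := 1 + η) hβ hΛ (by positivity) (by
    apply mul_neg_of_neg_of_pos
    · rw [sub_neg, div_lt_one] <;> linarith
    · rw [one_div_one_div]; linarith)
  have hη2 : 0 < 1 - η / 2 := by linarith
  -- `r2` has to lie strictly between `1` and `1 / (1 - η)`.
  have e2 := tail_small (r := 1 / (1 - η / 2)) (κ := 1 - η) hβ hΛ (by positivity) (by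
    apply mul_neg_of_pos_of_neg
    · rw [sub_pos, lt_div_iff₀] <;> linarith
    · rw [one_div_one_div]; linarith)
  set r1 := 1 / (1 + η / 2) with hr1
  set r2 := 1 / (1 - η / 2) with hr2
  have hr1p : 0 < r1 := by positivity
  have hr2p : 0 < r2 := by positivity
  have hr1l : r1 < 1 := by rw [hr1, div_lt_one] <;> linarith
  have hr2l : 1 < r2 := by rw [hr2, lt_div_iff₀] <;> linarith
  filter_upwards [e1, e2, self_mem_nhdsWithin] with t h1 h2 ht n hn
  have ht : 0 < t := ht
  have hnN : N0 ≤ n := by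
    have : 0 ≤ (1 + η) * β / t ^ 2 := by positivity
    exact_mod_cast (by linarith : (N0 : ℝ) ≤ n)
  have hpn : 0 < p n := by linarith [hp1 n hnN]
  have hmid : HasSum (fun m : ℕ => if m ∈ Finset.range (n + 1) then
      p n * exp (-((1 - η) * β / t)) else 0) ((n + 1) * (p n * exp (-((1 - η) * β / t)))) := by
    have := hasSum_sum_of_ne_finset_zero (L := SummationFilter.unconditional ℕ)
      (f := fun m : ℕ => if m ∈ Finset.range (n + 1) then
      p n * exp (-((1 - η) * β / t)) else 0) (s := Finset.range (n + 1))
      (by intro b hb; simp [hb])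
    convert this using 1
    rw [Finset.sum_congr rfl (fun x hx => if_pos hx)]
    simp
  have hsum := (hmid.add ((hP (r1 * t) (by positivity)).mul_left
    (exp ((r1 - 1) * (1 + η) * β / t)))).add
    ((hP (r2 * t) (by positivity)).mul_left (exp ((r2 - 1) * (1 - η) * β / t)))
  have key := hasSum_le ?_ (hP t ht) hsum
  · have h3 : exp (Λ t) / 2 ≤ (n + 1) * (p n * exp (-((1 - η) * β / t))) := by linarith
    have h4 := Real.log_le_log (by positivity) h3
    rw [Real.log_div (by positivity) (by norm_num), Real.log_exp,
      Real.log_mul (by positivity) (by positivity), Real.log_mul (by positivity) (by positivity),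
      Real.log_exp] at h4
    linarith
  · intro m
    have ha : 0 ≤ exp ((r1 - 1) * (1 + η) * β / t) * (p m * exp (-(r1 * t) * m)) :=
      mul_nonneg (exp_pos _).le (mul_nonneg (hp0 m) (exp_pos _).le)
    have hb : 0 ≤ exp ((r2 - 1) * (1 - η) * β / t) * (p m * exp (-(r2 * t) * m)) :=
      mul_nonneg (exp_pos _).le (mul_nonneg (hp0 m) (exp_pos _).le)
    have hc : 0 ≤ (if m ∈ Finset.range (n + 1) then
        p n * exp (-((1 - η) * β / t)) else 0) := by
      split_ifs <;> positivity
    have hform : ∀ r κ : ℝ, exp ((r - 1) * κ * β / t) * (p m * exp (-(r * t) * m))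
        = p m * exp (-t * m) * exp ((r - 1) * (κ * β / t ^ 2 - m) * t) := by
      intro r κ
      rw [mul_left_comm, ← exp_add, mul_assoc (p m), ← exp_add]
      have e : (r - 1) * κ * β / t + -(r * t) * m
          = -t * m + (r - 1) * (κ * β / t ^ 2 - m) * t := by
        field_simp
        ring
      rw [e]
    have hq : 0 ≤ p m * exp (-t * m) := mul_nonneg (hp0 m) (exp_pos _).le
    -- Each `m` is above the window, below it, or inside it, and one of the three summands wins.
    rcases lt_or_ge ((1 + η) * β / t ^ 2) (m : ℝ) with hm | hm
    · have : p m * exp (-t * m) ≤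
          exp ((r1 - 1) * (1 + η) * β / t) * (p m * exp (-(r1 * t) * m)) := by
        rw [hform]
        apply le_mul_of_one_le_right hq
        apply one_le_exp
        exact mul_nonneg (mul_nonneg_of_nonpos_of_nonpos (by linarith) (by linarith)) ht.le
      linarith
    rcases lt_or_ge (m : ℝ) ((1 - η) * β / t ^ 2) with hm' | hm'
    · have : p m * exp (-t * m) ≤
          exp ((r2 - 1) * (1 - η) * β / t) * (p m * exp (-(r2 * t) * m)) := by
        rw [hform]
        apply le_mul_of_one_le_right hq
        apply one_le_exp
        exact mul_nonneg (mul_nonneg (by linarith) (by linarith)) ht.le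
      linarith
    · have hmn : m + N0 ≤ n := by exact_mod_cast (by linarith : (m : ℝ) + N0 ≤ n)
      have hmem : m ∈ Finset.range (n + 1) := by rw [Finset.mem_range]; omega
      have : p m * exp (-t * m) ≤ p n * exp (-((1 - η) * β / t)) := by
        apply mul_le_mul (hmono m n hmn) _ (exp_pos _).le hpn.le
        apply exp_le_exp.2
        have : (1 - η) * β / t = t * ((1 - η) * β / t ^ 2) := by field_simp
        rw [this]
        nlinarith
      simp only [if_pos hmem]
      linarith

/-- Tauberian theorem: if `∑ p n e^{-sn} = exp (Λ s)` with `s Λ(s) → β` as `s → 0⁺`, and `p` is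
nearly monotone, then `log (p n) ~ 2 √(β n)`. -/
theorem tauber {p : ℕ → ℝ} {Λ : ℝ → ℝ} {β : ℝ} {N0 : ℕ} (hβ : 0 < β)
    (hp0 : ∀ n, 0 ≤ p n) (hp1 : ∀ n, N0 ≤ n → 1 ≤ p n)
    (hmono : ∀ m n, m + N0 ≤ n → p m ≤ p n)
    (hP : ∀ s, 0 < s → HasSum (fun n : ℕ => p n * exp (-s * n)) (exp (Λ s)))
    (hΛ : Tendsto (fun s => s * Λ s) (nhdsWithin 0 (Set.Ioi 0)) (nhds β)) :
    Tendsto (fun n : ℕ => log (p n) / √n) atTop (nhds (2 * √β)) := by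
  have hsq : Tendsto (fun n : ℕ => √(n : ℝ)) atTop atTop :=
    tendsto_sqrt_atTop.comp tendsto_natCast_atTop_atTop
  have hscale : ∀ τ : ℝ, 0 < τ → Tendsto (fun n : ℕ => τ / √(n : ℝ)) atTop
      (nhdsWithin 0 (Set.Ioi 0)) := by
    intro τ hτ
    refine tendsto_nhdsWithin_iff.2 ⟨hsq.const_div_atTop τ, ?_⟩
    filter_upwards [eventually_gt_atTop 0] with n hn
    have : (0 : ℝ) < n := by exact_mod_cast hn
    exact div_pos hτ (sqrt_pos.2 this)
  have hsβ : 0 < √β := sqrt_pos.2 hβ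
  have hββ : √β * √β = β := mul_self_sqrt hβ.le
  refine tendsto_order.2 ⟨fun c hc => ?_, fun c hc => ?_⟩
  · have hcont : Tendsto (fun η : ℝ => (2 - η) * β / √((1 + 2 * η) * β))
        (nhdsWithin 0 (Set.Ioi 0)) (nhds (2 * √β)) := by
      have : ContinuousAt (fun η : ℝ => (2 - η) * β / √((1 + 2 * η) * β)) 0 := by
        apply ContinuousAt.div
        · fun_prop
        · fun_prop
        · simp; positivity
      have h := this.tendsto
      have e : (2 - 0) * β / √((1 + 2 * 0) * β) = 2 * √β := by
        simp only [sub_zero, mul_zero, add_zero, one_mul]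
        rw [div_eq_iff hsβ.ne', mul_assoc, hββ]
      rw [e] at h
      exact h.mono_left nhdsWithin_le_nhds
    obtain ⟨η, hηc, hη, hη1⟩ := ((hcont.eventually_const_lt hc).and
      (Ioo_mem_nhdsGT (show (0 : ℝ) < 1 by norm_num))).exists
    -- With `t = τ / √n` the right end of the window is `n (1 + η) / (1 + 2 η)`, which is below
    -- `n - N0` for large `n`.
    set τ := √((1 + 2 * η) * β) with hτ
    have hτ2 : τ ^ 2 = (1 + 2 * η) * β := sq_sqrt (by positivity)
    have hτp : 0 < τ := sqrt_pos.2 (by positivity)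
    have hlog : Tendsto (fun n : ℕ => log ((n : ℝ) + 1) / √(n : ℝ)) atTop (nhds 0) := by
      have h1 : (fun x : ℝ => log (x + 1)) =o[atTop] fun x => √x := by
        have h2 : (fun x : ℝ => log (x + 1)) =o[atTop] fun x : ℝ => (x + 1) ^ (1 / 2 : ℝ) :=
          (isLittleO_log_rpow_atTop (by norm_num : (0 : ℝ) < 1 / 2)).comp_tendsto
            (tendsto_atTop_add_const_right _ 1 tendsto_id)
        refine h2.trans_isBigO (IsBigO.of_bound (√2) ?_)
        filter_upwards [eventually_ge_atTop 1] with x hx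
        rw [← sqrt_eq_rpow, norm_of_nonneg (sqrt_nonneg _), norm_of_nonneg (sqrt_nonneg _),
          ← sqrt_mul (by norm_num)]
        exact sqrt_le_sqrt (by linarith)
      exact (h1.tendsto_div_nhds_zero).comp tendsto_natCast_atTop_atTop
    have hlim : Tendsto (fun n : ℕ => (τ / √(n : ℝ) * Λ (τ / √(n : ℝ))) / τ + (1 - η) * β / τ
        - log 2 / √(n : ℝ) - log ((n : ℝ) + 1) / √(n : ℝ)) atTop
        (nhds (β / τ + (1 - η) * β / τ - 0 - 0)) :=
      ((((hΛ.comp (hscale τ hτp)).div_const τ).add tendsto_const_nhds).sub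
        (hsq.const_div_atTop _)).sub hlog
    have hval : β / τ + (1 - η) * β / τ - 0 - 0 = (2 - η) * β / τ := by ring
    rw [hval] at hlim
    have hlarge : ∀ᶠ n : ℕ in atTop, (N0 : ℝ) * (1 + 2 * η) / η ≤ n :=
      tendsto_natCast_atTop_atTop.eventually_ge_atTop _
    filter_upwards [hlim.eventually_const_lt hηc,
      (hscale τ hτp).eventually (lower_aux hβ hp0 hp1 hmono hP hΛ hη hη1),
      hlarge, eventually_gt_atTop 0] with n h1 h2 h3 h4
    have hn : (0 : ℝ) < n := by exact_mod_cast h4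
    have hsn : 0 < √(n : ℝ) := sqrt_pos.2 hn
    have hss : √(n : ℝ) ^ 2 = n := sq_sqrt hn.le
    have h5 := h2 n (by
      rw [div_pow, hτ2, hss]
      have : (1 + η) * β / ((1 + 2 * η) * β / n) = n - n * η / (1 + 2 * η) := by
        field_simp; ring
      rw [this]
      rw [div_le_iff₀ hη] at h3
      have : (N0 : ℝ) ≤ n * η / (1 + 2 * η) := by
        rw [le_div_iff₀ (by positivity)]; exact h3
      linarith)
    refine h1.trans_le ?_
    rw [le_div_iff₀ hsn]
    refine le_trans (le_of_eq ?_) h5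
    field_simp
  -- Upper bound: a single term is at most the whole sum, at the optimal point `s = √β / √n`.
  · have hlim : Tendsto (fun n : ℕ => √β + (√β / √(n : ℝ) * Λ (√β / √(n : ℝ))) / √β) atTop
        (nhds (√β + β / √β)) :=
      tendsto_const_nhds.add ((hΛ.comp (hscale _ hsβ)).div_const _)
    have hval : √β + β / √β = 2 * √β := by
      rw [div_sqrt]; ring
    rw [hval] at hlim
    filter_upwards [hlim.eventually_lt_const hc, eventually_gt_atTop 0,
      eventually_ge_atTop N0] with n h1 h2 h3
    have hn : (0 : ℝ) < n := by exact_mod_cast h2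
    have hsn : 0 < √(n : ℝ) := sqrt_pos.2 hn
    have hss : √(n : ℝ) ^ 2 = n := sq_sqrt hn.le
    refine lt_of_le_of_lt ?_ h1
    have hpn : 0 < p n := by linarith [hp1 n h3]
    have h4 := le_hasSum (hP (√β / √(n : ℝ)) (by positivity)) n
      (fun m _ => mul_nonneg (hp0 m) (exp_pos _).le)
    have h5 := Real.log_le_log (by positivity) h4
    rw [Real.log_exp, Real.log_mul hpn.ne' (exp_pos _).ne', Real.log_exp] at h5
    rw [div_le_iff₀ hsn]
    have e1 : (√β + (√β / √(n : ℝ) * Λ (√β / √(n : ℝ))) / √β) * √n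
      = √β * √n + Λ (√β / √(n : ℝ)) := by field_simp
    have e2 : -(√β / √(n : ℝ)) * n = - (√β * √n) := by
      field_simp; rw [hss]
    rw [e1]
    rw [e2] at h5
    linarith

theorem partition_asymptotics_of_density (A : Set ℕ) (hA : ∀ a ∈ A, 0 < a)
    (hgcd : ∀ d : ℕ, (∀ a ∈ A, d ∣ a) → d = 1) (α : ℝ) (hα : 0 < α)
    (hd : Tendsto (fun x : ℝ => (countA A x : ℝ) / x) atTop (nhds α)) :
    (fun n : ℕ => Real.log (pA A n)) ~[atTop]
      (fun n : ℕ => Real.pi * Real.sqrt (2 / 3) * Real.sqrt (α * n)) := by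
  set a : ℕ → ℝ := A.indicator 1 with ha
  have ha0 : ∀ n, 0 ≤ a n := fun n => Set.indicator_nonneg (fun _ _ => zero_le_one) n
  have ha1 : ∀ n, a n ≤ 1 := fun n => Set.indicator_le_self' (fun _ _ => zero_le_one) n
  have h0 : a 0 = 0 := Set.indicator_of_notMem (fun h => (hA 0 h).false) _
  have hmean : Tendsto (fun n : ℕ => (∑ k ∈ Finset.range (n + 1), a k) / n) atTop (nhds α) := by
    refine (hd.comp tendsto_natCast_atTop_atTop).congr fun n => ?_
    rw [ha, sum_indicator_eq_countA]
    rfl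
  obtain ⟨N0, hN0⟩ := pA_quasi_mono A hA hgcd
  have hmono : ∀ m n, m + N0 ≤ n → (pA A m : ℝ) ≤ pA A n := fun m n h => by
    exact_mod_cast hN0 m n h
  have hone : ∀ n, N0 ≤ n → (1 : ℝ) ≤ pA A n := fun n hn => by
    have := hmono 0 n (by omega)
    rwa [pA_zero, Nat.cast_one] at this
  have hP : ∀ s : ℝ, 0 < s → HasSum (fun n : ℕ => (pA A n : ℝ) * exp (-s * n))
      (exp (∑' n, a n * -log (1 - exp (-s) ^ n))) := by
    intro s hs
    have hx1 : exp (-s) < 1 := by simpa using hs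
    have h := generating_function A hA (exp_pos _) hx1
      (log_product_swap ha0 ha1 h0 (exp_pos _) hx1).summable
    have e : ∀ n : ℕ, exp (-s * n) = exp (-s) ^ n := fun n => by
      rw [← exp_nat_mul, mul_comm]
    simp only [e]
    exact h
  have hlim := tauber (by positivity) (fun n => Nat.cast_nonneg _) hone hmono hP
    (log_product_asymp ha0 ha1 h0 hmean)
  have hc : 2 * √(α * (π ^ 2 / 6)) = π * √(2 / 3) * √α := by
    have e : α * (π ^ 2 / 6) = (π / 2) ^ 2 * ((2 / 3) * α) := by ring
    rw [e, sqrt_mul (by positivity), sqrt_sq (by positivity), sqrt_mul (by norm_num)]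
    ring
  rw [hc] at hlim
  set c := π * √(2 / 3) * √α with hcdef
  have hcpos : 0 < c := by positivity
  refine (isEquivalent_iff_tendsto_one ?_).2 ?_
  · filter_upwards [eventually_gt_atTop 0] with n hn
    have : (0 : ℝ) < n := by exact_mod_cast hn
    positivity
  · have h := hlim.div_const c
    rw [div_self hcpos.ne'] at h
    refine h.congr fun n => ?_
    simp only [Pi.div_apply]
    rw [sqrt_mul hα.le, ← mul_assoc, ← hcdef, div_div, mul_comm c]
end

section
/- Let a₁, …, a_ℓ, m be integers with 1 ≤ a₁ < ⋯ < a_ℓ ≤ m and gcd(a₁, …, a_ℓ, m) = 1. Let A be the set of all positive integers a such that a ≡ a_i (mod m) for some i = 1, …, ℓ. Then log p_A(n) ~ c₀√(ℓn/m) as n → ∞, where c₀ = π√(2/3). -/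
/-!
Let `F(t) = ∑ p_A(n) exp (-n t)` be the generating function. Euler's product gives
`log F(t) = -∑_{a ∈ A} log (1 - exp (-a t))`. Expanding the logarithms and summing over each of the
`l` arithmetic progressions that make up `A`, this is
`∑_i ∑_{k ≥ 1} exp (-a_i k t) / (k (1 - exp (-m k t)))`, and dominated convergence shows that
`t log F(t) → B := (l / m) (π ^ 2 / 6)` as `t → 0⁺` (`hasSum_pA`, `hasSum_log_progressions`,
`tendsto_apLog`).

A Tauberian argument (`tauberian`) turns this into `log p_A(n) ~ 2 √(B n)`, which is the claim. The
upper bound comes from `p_A(n) ≤ exp (n t) F(t)` at `t = √(B / n)`. For the lower bound, comparing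
`F(t)` with `F(t (1 ± θ))` shows that `F(t)` is carried by the `n` close to `B / t ^ 2`, so some
`p_A(j)` with `j` slightly smaller than `n` is large; since `gcd A = 1`, every large integer is a
sum of elements of `A`, whence `p_A(j) ≤ p_A(n)` as soon as `n - j` is large (`exists_pA_mono`).
-/

open Filter Asymptotics Real

open scoped Topology

/-! ### A Tauberian theorem -/

theorem geom_bound {u : ℝ} (hu : 0 < u) :
    HasSum (fun j : ℕ => exp (-(j * u))) (1 - exp (-u))⁻¹ ∧ (1 - exp (-u))⁻¹ ≤ 1 + 1 / u := by
  have h1 : exp (-u) < 1 := by simpa using hu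
  refine ⟨?_, ?_⟩
  · have := hasSum_geometric_of_lt_one (exp_pos (-u)).le h1
    convert! this using 2 with j
    rw [← Real.exp_nat_mul]; ring_nf
  · have h2 : exp (-u) ≤ 1 / (1 + u) := by
      rw [Real.exp_neg, ← one_div]
      exact one_div_le_one_div_of_le (by linarith) (by linarith [Real.add_one_le_exp u])
    have h3 : u / (1 + u) ≤ 1 - exp (-u) := by
      have : u / (1 + u) = 1 - 1 / (1 + u) := by field_simp; ring
      linarith
    calc (1 - exp (-u))⁻¹ ≤ (u / (1 + u))⁻¹ := inv_anti₀ (by positivity) h3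
      _ = 1 + 1 / u := by field_simp; ring

/-- If `G t ~ B / t` as `t → 0⁺`, then `G (t * s)` is eventually within a factor `1 ± η` of
`(B / t) / s`, for each fixed dilation `s > 0`. -/
theorem eventually_bounds {G : ℝ → ℝ} {B : ℝ} (hB : 0 < B)
    (hlim : Tendsto (fun t => t * G t) (𝓝[>] 0) (𝓝 B)) {η : ℝ} (hη : 0 < η) {s : ℝ} (hs : 0 < s) :
    ∀ᶠ t in 𝓝[>] (0 : ℝ), (1 - η) * (B / t) / s ≤ G (t * s) ∧ G (t * s) ≤ (1 + η) * (B / t) / s := by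
  have hmap : Tendsto (fun t : ℝ => t * s) (𝓝[>] 0) (𝓝[>] 0) := by
    refine tendsto_nhdsWithin_iff.2 ⟨?_, ?_⟩
    · have : Tendsto (fun t : ℝ => t * s) (𝓝 0) (𝓝 (0 * s)) := by
        exact (continuous_mul_const s).tendsto 0
      rw [zero_mul] at this
      exact this.mono_left nhdsWithin_le_nhds
    · filter_upwards [self_mem_nhdsWithin] with t ht
      exact mul_pos ht hs
  have h := hlim.comp hmap
  have h1 := h.eventually (lt_mem_nhds (show (1 - η) * B < B by nlinarith))
  have h2 := h.eventually (gt_mem_nhds (show B < (1 + η) * B by nlinarith))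
  filter_upwards [h1, h2, self_mem_nhdsWithin] with t h1 h2 ht
  have ht : 0 < t := ht
  have hts : 0 < t * s := by positivity
  simp only [Function.comp] at h1 h2
  constructor
  · have : (1 - η) * (B / t) / s = ((1 - η) * B) / (t * s) := by field_simp
    rw [this, div_le_iff₀ hts]; linarith
  · have : (1 + η) * (B / t) / s = ((1 + η) * B) / (t * s) := by field_simp
    rw [this, le_div_iff₀ hts]; linarith

/-- The lower bound of the Tauberian theorem. With `y = B / t`, the mass of the series
`∑ p j exp (-j t)`, which is about `exp y`, sits on the `j` with `j t ∈ [(1 - δ) y, (1 + δ) y]`: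
replacing `t` by `t (1 ± θ)` (a Chernoff bound) shows that each of the two tails is at most
`exp ((1 - θ ^ 2) y)`. On the middle range `p j ≤ p N`, so `p N` cannot be small. -/
theorem tauberian_core {p : ℕ → ℝ} (hp0 : ∀ n, 0 ≤ p n) {N₀ : ℕ}
    (hmono : ∀ j n, j + N₀ ≤ n → p j ≤ p n) {G : ℝ → ℝ}
    (hG : ∀ t, 0 < t → HasSum (fun n : ℕ => p n * exp (-(n * t))) (exp (G t)))
    {B : ℝ} (hB : 0 < B) (hlim : Tendsto (fun t => t * G t) (𝓝[>] 0) (𝓝 B))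
    {δ : ℝ} (hδ : 0 < δ) (hδ' : δ ≤ 1 / 2) :
    ∀ᶠ t in 𝓝[>] (0 : ℝ), ∀ N : ℕ, (1 + δ) * (B / t ^ 2) + N₀ ≤ N →
      exp ((2 - 3 * δ) * (B / t)) ≤ p N := by
  -- With `δ = 4 θ` both tail exponents, `1 / (1 ± θ) ± θ (1 ∓ δ)`, are at most `1 - 2 θ ^ 2`
  -- up to the relative error `η = θ ^ 2 / 4` allowed in `G`.
  obtain ⟨θ, hθ⟩ : ∃ θ, θ = δ / 4 := ⟨_, rfl⟩
  have hθ0 : 0 < θ := by linarith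
  have hη : 0 < θ ^ 2 / 4 := by positivity
  have hy : Tendsto (fun t : ℝ => B / t) (𝓝[>] 0) atTop :=
    (tendsto_inv_nhdsGT_zero.const_mul_atTop hB).congr fun t => (div_eq_mul_inv _ _).symm
  have hexp : ∀ᶠ y : ℝ in atTop, 3 + y / (δ * B) < exp (3 / 4 * θ ^ 2 * y) := by
    have hc : 0 < 3 / 4 * θ ^ 2 := by positivity
    have h1 : Tendsto (fun y : ℝ => exp (3 / 4 * θ ^ 2 * y) / (3 / 4 * θ ^ 2 * y) ^ 1) atTop atTop :=
      (tendsto_exp_div_pow_atTop 1).comp (tendsto_id.const_mul_atTop hc)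
    filter_upwards [h1.eventually_gt_atTop ((3 + 1 / (δ * B)) / (3 / 4 * θ ^ 2)),
      eventually_ge_atTop 1] with y h hy
    rw [pow_one, lt_div_iff₀ (by positivity)] at h
    have e : (3 + 1 / (δ * B)) / (3 / 4 * θ ^ 2) * (3 / 4 * θ ^ 2 * y) = 3 * y + y / (δ * B) := by
      field_simp
    rw [e] at h
    linarith
  filter_upwards [eventually_bounds hB hlim hη one_pos,
    eventually_bounds hB hlim hη (show 0 < 1 + θ by linarith),
    eventually_bounds hB hlim hη (show 0 < 1 - θ by linarith),
    hy.eventually hexp, self_mem_nhdsWithin] with t h1 h2 h3 h4 ht N hN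
  have ht : 0 < t := ht
  obtain ⟨y, hyd⟩ : ∃ y, y = B / t := ⟨_, rfl⟩
  have hy0 : 0 < y := by rw [hyd]; positivity
  rw [← hyd] at h1 h2 h3 h4 ⊢
  rw [mul_one, div_one] at h1
  by_contra! hlt
  have hs0 := hG t ht
  have hs1 := (hG (t * (1 + θ)) (by positivity)).mul_right (exp (θ * (1 - δ) * y))
  have hs2 := (hG (t * (1 - θ)) (mul_pos ht (by linarith))).mul_right (exp (-(θ * (1 + δ) * y)))
  obtain ⟨hs3, hgeo⟩ := geom_bound (show 0 < δ * t by positivity)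
  have hs3 := hs3.mul_left (p N * exp (-((1 - δ) ^ 2 * y)))
  -- Each term is at most the sum of three majorants, one for each range of `j`: geometric in the
  -- middle, dilated to `t (1 + θ)` on the left and to `t (1 - θ)` on the right.
  have key := hasSum_le (fun j => ?_) hs0 ((hs3.add hs1).add hs2)
  · have e1 : p N * exp (-((1 - δ) ^ 2 * y)) * (1 - exp (-(δ * t)))⁻¹ ≤
        exp ((1 - θ ^ 2) * y) * (1 + 1 / (δ * t)) := by
      have hnn : 0 ≤ (1 - exp (-(δ * t)))⁻¹ := by
        have : exp (-(δ * t)) < 1 := by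
          rw [Real.exp_lt_one_iff]; linarith [mul_pos hδ ht]
        exact inv_nonneg.2 (by linarith)
      have : p N * exp (-((1 - δ) ^ 2 * y)) ≤ exp ((1 - θ ^ 2) * y) := by
        calc _ ≤ exp ((2 - 3 * δ) * y) * exp (-((1 - δ) ^ 2 * y)) := by gcongr
          _ = exp ((2 - 3 * δ) * y + -((1 - δ) ^ 2 * y)) := (Real.exp_add _ _).symm
          _ ≤ _ := by
            apply Real.exp_le_exp.2
            have : 0 ≤ (δ + δ ^ 2 - θ ^ 2) * y := mul_nonneg (by rw [hθ]; nlinarith) hy0.le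
            linarith
      gcongr
    have e2 : exp (G (t * (1 + θ))) * exp (θ * (1 - δ) * y) ≤ exp ((1 - θ ^ 2) * y) := by
      rw [← Real.exp_add]
      apply Real.exp_le_exp.2
      have : (1 + θ ^ 2 / 4) * y / (1 + θ) ≤ (1 + θ ^ 2 / 4 - θ + θ ^ 2) * y := by
        rw [div_le_iff₀ (by linarith)]
        have : 0 ≤ (θ ^ 3 / 4 + θ ^ 3) * y := by positivity
        linarith
      have hd : δ = 4 * θ := by linarith
      have : 0 ≤ θ ^ 2 * y := by positivity
      rw [hd]
      linarith [h2.2]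
    have e3 : exp (G (t * (1 - θ))) * exp (-(θ * (1 + δ) * y)) ≤ exp ((1 - θ ^ 2) * y) := by
      rw [← Real.exp_add]
      apply Real.exp_le_exp.2
      have : (1 + θ ^ 2 / 4) * y / (1 - θ) ≤ (1 + θ + 2 * θ ^ 2) * y := by
        rw [div_le_iff₀ (by linarith)]
        have : 0 ≤ (θ ^ 2 * (3 / 4 - 2 * θ)) * y := by
          have : 0 ≤ 3 / 4 - 2 * θ := by linarith
          positivity
        linarith
      have hd : δ = 4 * θ := by linarith
      have : 0 ≤ θ ^ 2 * y := by positivity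
      rw [hd]
      linarith [h3.2]
    have e0 : exp ((1 - θ ^ 2) * y) * exp (3 / 4 * θ ^ 2 * y) ≤ exp (G t) := by
      rw [← Real.exp_add]
      apply Real.exp_le_exp.2
      linarith [h1.1]
    have e4 : y / (δ * B) = 1 / (δ * t) := by rw [hyd]; field_simp
    rw [e4] at h4
    have := mul_lt_mul_of_pos_left h4 (Real.exp_pos ((1 - θ ^ 2) * y))
    linarith
  · have hpj := hp0 j
    have c1 : 0 ≤ p N * exp (-((1 - δ) ^ 2 * y)) * exp (-(j * (δ * t))) := by
      have := hp0 N
      positivity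
    have c2 : 0 ≤ p j * exp (-(j * (t * (1 + θ)))) * exp (θ * (1 - δ) * y) := by positivity
    have c3 : 0 ≤ p j * exp (-(j * (t * (1 - θ)))) * exp (-(θ * (1 + δ) * y)) := by positivity
    rcases le_total (j * t) ((1 - δ) * y) with hj | hj
    · have : p j * exp (-(j * t)) ≤
          p j * exp (-(j * (t * (1 + θ)))) * exp (θ * (1 - δ) * y) := by
        rw [mul_assoc, ← Real.exp_add]
        gcongr
        nlinarith
      linarith
    rcases le_total ((1 + δ) * y) (j * t) with hj' | hj'
    · have : p j * exp (-(j * t)) ≤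
          p j * exp (-(j * (t * (1 - θ)))) * exp (-(θ * (1 + δ) * y)) := by
        rw [mul_assoc, ← Real.exp_add]
        gcongr
        nlinarith
      linarith
    · have hjN : j + N₀ ≤ N := by
        have : (j : ℝ) ≤ (1 + δ) * (B / t ^ 2) := by
          have : (1 + δ) * (B / t ^ 2) = (1 + δ) * y / t := by rw [hyd]; field_simp
          rw [this, le_div_iff₀ ht]; exact hj'
        have : (j : ℝ) + N₀ ≤ N := by linarith
        exact_mod_cast this
      have : p j * exp (-(j * t)) ≤ p N * exp (-((1 - δ) ^ 2 * y)) * exp (-(j * (δ * t))) := by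
        rw [mul_assoc, ← Real.exp_add]
        have := hmono j N hjN
        have := hp0 N
        gcongr
        have := mul_le_mul_of_nonneg_left hj (show 0 ≤ 1 - δ by linarith)
        nlinarith
      linarith

/-- A Tauberian theorem: if the generating function of `p ≥ 0` is `exp (G t)` with `G t ~ B / t`
as `t → 0⁺`, and `p` is monotone up to a bounded shift, then `log (p n) ~ 2 √(B n)`. -/
theorem tauberian {p : ℕ → ℝ} (hp0 : ∀ n, 0 ≤ p n) {N₀ : ℕ}
    (hmono : ∀ j n, j + N₀ ≤ n → p j ≤ p n) {G : ℝ → ℝ}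
    (hG : ∀ t, 0 < t → HasSum (fun n : ℕ => p n * exp (-(n * t))) (exp (G t)))
    {B : ℝ} (hB : 0 < B) (hlim : Tendsto (fun t => t * G t) (𝓝[>] 0) (𝓝 B)) :
    Tendsto (fun n : ℕ => log (p n) / √n) atTop (𝓝 (2 * √B)) := by
  have hsB : 0 < √B := Real.sqrt_pos.2 hB
  have hBB : √B * √B = B := Real.mul_self_sqrt hB.le
  have hsq : Tendsto (fun n : ℕ => √(n : ℝ)) atTop atTop :=
    Real.tendsto_sqrt_atTop.comp tendsto_natCast_atTop_atTop
  have htn : ∀ c : ℝ, 0 < c → Tendsto (fun n : ℕ => c / √(n : ℝ)) atTop (𝓝[>] 0) := by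
    intro c hc
    refine tendsto_nhdsWithin_iff.2 ⟨hsq.const_div_atTop c, ?_⟩
    filter_upwards [eventually_gt_atTop 0] with n hn
    have : 0 < √(n : ℝ) := Real.sqrt_pos.2 (by exact_mod_cast hn)
    exact div_pos hc this
  -- The core bound at `t = √((1 + 2 δ) B / n)`; passing from `1 + δ` to `1 + 2 δ` leaves room
  -- for the shift `N₀`.
  have hlower : ∀ δ : ℝ, 0 < δ → δ ≤ 1 / 2 → ∀ᶠ n : ℕ in atTop,
      0 < p n ∧ (2 - 3 * δ) * (√B / √(1 + 2 * δ)) ≤ log (p n) / √n := by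
    intro δ hδ hδ'
    have hd : 0 < √(1 + 2 * δ) := Real.sqrt_pos.2 (by linarith)
    have hdd : √(1 + 2 * δ) ^ 2 = 1 + 2 * δ := Real.sq_sqrt (by linarith)
    have h := (htn (√(1 + 2 * δ) * √B) (by positivity)).eventually
      (tauberian_core hp0 hmono hG hB hlim hδ hδ')
    have hbig := tendsto_natCast_atTop_atTop (R := ℝ) |>.eventually_ge_atTop
      (N₀ * (1 + 2 * δ) / δ)
    filter_upwards [h, hbig, eventually_gt_atTop 0] with n h hbig hn
    have hn' : (0 : ℝ) < n := by exact_mod_cast hn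
    have hsn : 0 < √(n : ℝ) := Real.sqrt_pos.2 hn'
    have hnn : √(n : ℝ) ^ 2 = n := Real.sq_sqrt hn'.le
    have e1 : B / (√(1 + 2 * δ) * √B / √n) ^ 2 = n / (1 + 2 * δ) := by
      rw [div_pow, mul_pow, hdd, hnn, Real.sq_sqrt hB.le]; field_simp
    have e2 : B / (√(1 + 2 * δ) * √B / √n) = √B / √(1 + 2 * δ) * √n := by
      nth_rewrite 1 [← hBB]; field_simp
    have h := h n (by
      rw [e1]
      rw [div_le_iff₀ hδ] at hbig
      have : (1 + δ) * (n / (1 + 2 * δ)) + N₀ = ((1 + δ) * n + N₀ * (1 + 2 * δ)) / (1 + 2 * δ) := by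
        field_simp
      rw [this, div_le_iff₀ (by linarith)]
      nlinarith)
    have hpos : 0 < p n := (Real.exp_pos _).trans_le h
    refine ⟨hpos, ?_⟩
    rw [le_div_iff₀ hsn]
    rw [← Real.le_log_iff_exp_le hpos, e2] at h
    linarith
  -- A single term is at most the whole series; `t = √(B / n)` minimises `n t + B / t`.
  have hupper : ∀ᶠ n : ℕ in atTop,
      log (p n) / √n ≤ √B + (√B / √n * G (√B / √n)) / √B := by
    filter_upwards [hlower (1 / 2) (by norm_num) le_rfl, eventually_gt_atTop 0] with n h hn
    have hn' : (0 : ℝ) < n := by exact_mod_cast hn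
    have hsn : 0 < √(n : ℝ) := Real.sqrt_pos.2 hn'
    have hnn : √(n : ℝ) * √n = n := Real.mul_self_sqrt hn'.le
    have ht : 0 < √B / √n := by positivity
    have h1 := le_hasSum (hG _ ht) n fun j _ => mul_nonneg (hp0 j) (Real.exp_pos _).le
    have h2 := Real.log_le_log (mul_pos h.1 (Real.exp_pos _)) h1
    rw [Real.log_exp, Real.log_mul h.1.ne' (Real.exp_pos _).ne', Real.log_exp] at h2
    have e : (n : ℝ) * (√B / √n) = √B * √n := by
      nth_rewrite 1 [← hnn]; field_simp
    rw [e] at h2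
    rw [div_le_iff₀ hsn]
    have : (√B + (√B / √n * G (√B / √n)) / √B) * √n = √B * √n + G (√B / √n) := by
      field_simp
    rw [this]; linarith
  have hul : Tendsto (fun n : ℕ => √B + (√B / √(n : ℝ) * G (√B / √(n : ℝ))) / √B) atTop
      (𝓝 (2 * √B)) := by
    have := ((hlim.comp (htn _ hsB)).div_const √B).const_add √B
    have e : √B + B / √B = 2 * √B := by
      rw [Real.div_sqrt]; ring
    rw [e] at this
    exact this
  refine tendsto_order.2 ⟨fun a ha => ?_, fun a ha => ?_⟩
  · have hcont : Tendsto (fun δ : ℝ => (2 - 3 * δ) * (√B / √(1 + 2 * δ))) (𝓝[>] 0)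
        (𝓝 (2 * √B)) := by
      have : ContinuousAt (fun δ : ℝ => (2 - 3 * δ) * (√B / √(1 + 2 * δ))) 0 := by
        refine ContinuousAt.mul (by fun_prop) (ContinuousAt.div₀ (by fun_prop) (by fun_prop) ?_)
        simp
      have h := this.tendsto
      simp only [mul_zero, sub_zero, add_zero, Real.sqrt_one, div_one] at h
      exact h.mono_left nhdsWithin_le_nhds
    obtain ⟨δ, h1, h2⟩ := ((hcont.eventually (lt_mem_nhds ha)).and
      (Ioc_mem_nhdsGT (show (0 : ℝ) < 1 / 2 by norm_num))).exists
    filter_upwards [hlower δ h2.1 h2.2] with n hn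
    linarith [hn.2]
  · filter_upwards [hupper, hul.eventually (gt_mem_nhds ha)] with n h1 h2
    linarith

/-! ### Euler's product on the real line -/

/-- Evaluation of real power series at a point of absolute convergence is multiplicative. -/
theorem hasSum_coeff_mul {f g : PowerSeries ℝ} {x s t : ℝ}
    (hf : HasSum (fun n => f.coeff n * x ^ n) s) (hg : HasSum (fun n => g.coeff n * x ^ n) t) :
    HasSum (fun n => (f * g).coeff n * x ^ n) (s * t) := by
  have e : ∀ n, (f * g).coeff n * x ^ n = ∑ kl ∈ Finset.HasAntidiagonal.antidiagonal n,
      (f.coeff kl.1 * x ^ kl.1) * (g.coeff kl.2 * x ^ kl.2) := by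
    intro n
    rw [PowerSeries.coeff_mul, Finset.sum_mul]
    refine Finset.sum_congr rfl fun kl hkl => ?_
    rw [← Finset.HasAntidiagonal.mem_antidiagonal.1 hkl, pow_add]; ring
  have hfn := hf.summable.norm
  have hgn := hg.summable.norm
  have h1 := (summable_norm_sum_mul_antidiagonal_of_summable_norm hfn hgn).of_norm
  have h2 := tsum_mul_tsum_eq_tsum_sum_antidiagonal_of_summable_norm hfn hgn
  rw [hf.tsum_eq, hg.tsum_eq] at h2
  simp_rw [e]
  rw [h2]
  exact h1.hasSum

open Classical in
theorem pA_eq_card_restricted (A : Set ℕ) (n : ℕ) :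
    pA A n = (Nat.Partition.restricted n (· ∈ A)).card := by
  rw [pA, Nat.card_eq_fintype_card, Fintype.card_subtype, Nat.Partition.restricted]

/-- Only the parts of size at most `n` matter for partitions of `n`. -/
theorem pA_le_pA {A B : Set ℕ} {n : ℕ} (h : ∀ a ≤ n, a ∈ A → a ∈ B) : pA A n ≤ pA B n := by
  refine Nat.card_le_card_of_injective
    (fun p => ⟨p.1, fun a ha => h a (p.1.le_of_mem_parts ha) (p.2 a ha)⟩) fun p q hpq => ?_
  simpa [Subtype.ext_iff] using hpq

open Classical in
/-- Euler's product for partitions into parts from `A` of size at most `N`, evaluated at a real `x`.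
The factors are indexed by `i`, standing for the part `i + 1`. -/
theorem hasSum_pA_truncated (A : Set ℕ) (N : ℕ) {x : ℝ} (hx0 : 0 ≤ x) (hx1 : x < 1) :
    HasSum (fun n => (pA (A ∩ {a | a ≤ N}) n : ℝ) * x ^ n)
      (∏ i ∈ Finset.range N, if i + 1 ∈ A then (1 - x ^ (i + 1))⁻¹ else 1) := by
  open scoped PowerSeries.WithPiTopology in
  have h1 := Nat.Partition.hasProd_powerSeriesMk_card_restricted ℝ (· ∈ A ∩ {a | a ≤ N})
  have h2 := h1.unique (hasProd_prod_of_ne_finset_one (s := Finset.range N) (fun b hb => by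
    rw [if_neg]
    rintro ⟨-, h⟩
    exact hb (Finset.mem_range.2 h)))
  have h3 : ∀ n, (pA (A ∩ {a | a ≤ N}) n : ℝ) = PowerSeries.coeff n
      (PowerSeries.mk fun n => ((Nat.Partition.restricted n (· ∈ A ∩ {a | a ≤ N})).card : ℝ)) := by
    intro n
    rw [PowerSeries.coeff_mk, pA_eq_card_restricted]
    congr!
  simp_rw [h3, h2]
  have key : ∀ s : Finset ℕ, s ⊆ Finset.range N → HasSum (fun n => (PowerSeries.coeff n
      (∏ i ∈ s, if i + 1 ∈ A ∩ {a | a ≤ N} then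
        ∑' j : ℕ, (PowerSeries.X : PowerSeries ℝ) ^ ((i + 1) * j) else 1)) * x ^ n)
      (∏ i ∈ s, if i + 1 ∈ A then (1 - x ^ (i + 1))⁻¹ else 1) := by
    intro s
    induction s using Finset.induction_on with
    | empty =>
      intro _
      simp only [Finset.prod_empty]
      convert! hasSum_ite_eq (0 : ℕ) (1 : ℝ) using 2 with n
      rw [PowerSeries.coeff_one]
      split_ifs with h <;> simp [h]
    | insert i s his ih =>
      intro hs
      rw [Finset.prod_insert his, Finset.prod_insert his]
      refine hasSum_coeff_mul ?_ (ih ((Finset.subset_insert _ _).trans hs))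
      have hiN : i + 1 ≤ N := Finset.mem_range.1 (hs (Finset.mem_insert_self _ _))
      by_cases hiA : i + 1 ∈ A
      · rw [if_pos ⟨hiA, hiN⟩, if_pos hiA]
        have hsm : Summable fun j : ℕ => (PowerSeries.X : PowerSeries ℝ) ^ ((i + 1) * j) := by
          simp_rw [pow_mul]
          exact PowerSeries.WithPiTopology.summable_pow_of_constantCoeff_eq_zero (by simp)
        have hc : ∀ n, PowerSeries.coeff n
            (∑' j : ℕ, (PowerSeries.X : PowerSeries ℝ) ^ ((i + 1) * j)) =
            if (i + 1) ∣ n then 1 else 0 := by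
          intro n
          rw [hsm.map_tsum _ (PowerSeries.WithPiTopology.continuous_coeff ℝ n)]
          simp_rw [PowerSeries.coeff_X_pow]
          split_ifs with hd
          · obtain ⟨c, rfl⟩ := hd
            rw [tsum_eq_single c]
            · simp
            · intro b hb
              rw [if_neg]
              intro h
              exact hb (Nat.eq_of_mul_eq_mul_left (Nat.succ_pos i) h).symm
          · convert! tsum_zero with j
            rw [if_neg]
            rintro rfl
            exact hd (dvd_mul_right _ _)
        have hinj : Function.Injective fun j : ℕ => (i + 1) * j :=
          fun a b h => Nat.eq_of_mul_eq_mul_left (Nat.succ_pos i) h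
        refine (hinj.hasSum_iff fun n hn => ?_).1 ?_
        · rw [hc, if_neg, zero_mul]
          rintro ⟨c, rfl⟩
          exact hn ⟨c, rfl⟩
        · have := hasSum_geometric_of_lt_one (pow_nonneg hx0 (i + 1))
            (pow_lt_one₀ hx0 hx1 (Nat.succ_ne_zero i))
          convert! this using 2 with j
          simp only [Function.comp]
          rw [hc, if_pos (dvd_mul_right _ _), one_mul, pow_mul]
      · rw [if_neg (fun h => hiA h.1), if_neg hiA]
        convert! hasSum_ite_eq (0 : ℕ) (1 : ℝ) using 2 with n
        rw [PowerSeries.coeff_one]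
        split_ifs with h <;> simp [h]
  exact key _ subset_rfl

open Classical in
/-- Euler's product for an arbitrary set of parts, in logarithmic form. It follows from the truncated
products because all terms are nonnegative and `pA A n` only depends on `A ∩ [1, n]`. -/
theorem hasSum_pA {A : Set ℕ} {x G : ℝ} (hx0 : 0 ≤ x) (hx1 : x < 1)
    (hG : HasSum (fun i : ℕ => if i + 1 ∈ A then -log (1 - x ^ (i + 1)) else 0) G) :
    HasSum (fun n => (pA A n : ℝ) * x ^ n) (exp G) := by
  have hlt : ∀ i : ℕ, x ^ (i + 1) < 1 := fun i => pow_lt_one₀ hx0 hx1 (Nat.succ_ne_zero i)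
  have hprod : ∀ N : ℕ, (∏ i ∈ Finset.range N, if i + 1 ∈ A then (1 - x ^ (i + 1))⁻¹ else 1) =
      exp (∑ i ∈ Finset.range N, if i + 1 ∈ A then -log (1 - x ^ (i + 1)) else 0) := by
    intro N
    rw [Real.exp_sum]
    refine Finset.prod_congr rfl fun i _ => ?_
    split_ifs
    · rw [Real.exp_neg, Real.exp_log (by linarith [hlt i])]
    · simp
  have hnn : ∀ n, 0 ≤ (pA A n : ℝ) * x ^ n := fun n => by positivity
  have hup : ∀ N : ℕ, ∑ n ∈ Finset.range N, (pA A n : ℝ) * x ^ n ≤ exp G := by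
    intro N
    have h := hasSum_pA_truncated A N hx0 hx1
    rw [hprod] at h
    calc ∑ n ∈ Finset.range N, (pA A n : ℝ) * x ^ n
        ≤ ∑ n ∈ Finset.range N, (pA (A ∩ {a | a ≤ N}) n : ℝ) * x ^ n := by
          refine Finset.sum_le_sum fun n hn => ?_
          have : pA A n ≤ pA (A ∩ {a | a ≤ N}) n :=
            pA_le_pA fun a ha haA => ⟨haA, ha.trans (Finset.mem_range.1 hn).le⟩
          gcongr
      _ ≤ _ := sum_le_hasSum _ (fun n _ => by positivity) h
      _ ≤ exp G := by
          refine Real.exp_le_exp.2 (sum_le_hasSum _ (fun i _ => ?_) hG)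
          split_ifs
          · rw [Left.nonneg_neg_iff]
            exact Real.log_nonpos (by linarith [hlt i]) (by linarith [pow_nonneg hx0 (i + 1)])
          · exact le_rfl
  have hsum := summable_of_sum_range_le hnn hup
  refine hsum.hasSum_iff.2 (le_antisymm (Real.tsum_le_of_sum_range_le hnn hup) ?_)
  refine le_of_tendsto ((Real.continuous_exp.tendsto _).comp hG.tendsto_sum_nat)
    (Eventually.of_forall fun N => ?_)
  have h := hasSum_pA_truncated A N hx0 hx1
  rw [hprod] at h
  refine hasSum_le (fun n => ?_) h hsum.hasSum
  have : pA (A ∩ {a | a ≤ N}) n ≤ pA A n := pA_le_pA fun a _ ha => ha.1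
  gcongr

/-! ### Monotonicity up to a shift -/

/-- If `gcd A = 1` then `pA A` is monotone up to a bounded shift: every large `d` is a sum of elements
of `A`, and adjoining those summands injects partitions of `j` into partitions of `j + d`. -/
theorem exists_pA_mono {A : Set ℕ} (hA0 : 0 ∉ A) (hA : ∀ d, (∀ a ∈ A, d ∣ a) → d = 1) :
    ∃ N₀, ∀ j n, j + N₀ ≤ n → pA A j ≤ pA A n := by
  obtain ⟨N₀, h⟩ := Nat.exists_mem_closure_of_ge A
  have h1 : Nat.setGcd A = 1 := hA _ fun a ha => Nat.setGcd_dvd_of_mem ha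
  refine ⟨N₀, fun j n hjn => ?_⟩
  obtain ⟨s, hs, hsum⟩ := AddSubmonoid.exists_multiset_of_mem_closure
    (h (n - j) (by omega) (by rw [h1]; exact one_dvd _))
  refine Nat.card_le_card_of_injective (fun p => ⟨⟨p.1.parts + s, ?_, ?_⟩, ?_⟩) fun p q hpq => ?_
  · intro i hi
    rcases Multiset.mem_add.1 hi with hi | hi
    · exact p.1.parts_pos hi
    · exact Nat.pos_of_ne_zero fun h0 => hA0 (h0 ▸ hs i hi)
  · rw [Multiset.sum_add, p.1.parts_sum, hsum]; omega
  · intro i hi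
    rcases Multiset.mem_add.1 hi with hi | hi
    · exact p.2 i hi
    · exact hs i hi
  · simp only [Subtype.mk.injEq, Nat.Partition.mk.injEq, add_left_inj] at hpq
    exact Subtype.ext (Nat.Partition.ext hpq)

/-! ### The generating function of a union of progressions -/

/-- The contribution of the parts `a, a + m, a + 2 m, …` to the logarithm of the generating function
at `exp (-t)`, namely `∑_{k ≥ 1} exp (-a k t) / (k (1 - exp (-m k t)))`; the summation index in the
definition is `k - 1`. -/
noncomputable def apLog (a m : ℕ) (t : ℝ) : ℝ :=
  ∑' k : ℕ, exp (-(a * ((k + 1) * t))) * (1 - exp (-(m * ((k + 1) * t))))⁻¹ / (k + 1)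

/-- Expand each logarithm in powers and interchange the two (nonnegative) summations. -/
theorem hasSum_apLog {a m : ℕ} (ha : 1 ≤ a) (hm : 1 ≤ m) {t : ℝ} (ht : 0 < t) :
    HasSum (fun q : ℕ => -log (1 - exp (-((a + m * q : ℕ) * t)))) (apLog a m t) := by
  have ha' : (1 : ℝ) ≤ a := by exact_mod_cast ha
  have hm' : (1 : ℝ) ≤ m := by exact_mod_cast hm
  let f : ℕ × ℕ → ℝ := fun z => exp (-((a + m * z.1 : ℕ) * t)) ^ (z.2 + 1) / (z.2 + 1)
  have hrow : ∀ q, HasSum (fun k => f (q, k)) (-log (1 - exp (-((a + m * q : ℕ) * t)))) := by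
    intro q
    have hx : |exp (-((a + m * q : ℕ) * t))| < 1 := ?_
    · have h := Real.hasSum_pow_div_log_of_abs_lt_one hx
      simp only [f]
      exact h
    rw [abs_of_pos (Real.exp_pos _), Real.exp_lt_one_iff]
    push_cast
    have : (0 : ℝ) ≤ m * q := by positivity
    nlinarith
  have hcol : ∀ k, HasSum (fun q => f (q, k))
      (exp (-(a * ((k + 1) * t))) * (1 - exp (-(m * ((k + 1) * t))))⁻¹ / (k + 1)) := by
    intro k
    have h := ((geom_bound (u := m * ((k + 1) * t)) (by positivity)).1.mul_left
      (exp (-(a * ((k + 1) * t))))).div_const ((k : ℝ) + 1)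
    convert! h using 2 with q
    simp only [f]
    rw [← Real.exp_nat_mul, ← Real.exp_add]
    push_cast
    ring_nf
  have hS : Summable f := by
    have g1 := (geom_bound (u := m * t) (by positivity)).1.summable
    have g2 := (geom_bound ht).1.summable
    refine (g1.mul_of_nonneg g2 (fun _ => (Real.exp_pos _).le)
      fun _ => (Real.exp_pos _).le).of_nonneg_of_le (fun z => by positivity) ?_
    rintro ⟨q, k⟩
    simp only [f]
    refine (div_le_self (by positivity) (by linarith [show (0:ℝ) ≤ k by positivity])).trans ?_
    rw [← Real.exp_nat_mul, ← Real.exp_add]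
    apply Real.exp_le_exp.2
    push_cast
    have h1 : (0 : ℝ) ≤ m * q * k * t := by positivity
    have h2 : (0 : ℝ) ≤ (a - 1) * (k * t) := mul_nonneg (by linarith) (by positivity)
    have h3 : (0 : ℝ) ≤ a * t := by positivity
    nlinarith
  have hT1 := hS.hasSum.prod_fiberwise hrow
  have hT2 := (hS.prod_symm.hasSum).prod_fiberwise (f := fun z : ℕ × ℕ => f z.swap) hcol
  have e : ∑' z : ℕ × ℕ, f z.swap = ∑' z, f z := (Equiv.prodComm ℕ ℕ).tsum_eq f
  rw [e] at hT2
  rw [apLog, hT2.tsum_eq]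
  exact hT1

/-- Dominated convergence: `t` times the `k`-th term of the series tends to `1 / (m k ^ 2)` and is at
most `2 / k ^ 2`. -/
theorem tendsto_apLog {a m : ℕ} (ha : 1 ≤ a) (hm : 1 ≤ m) :
    Tendsto (fun t => t * apLog a m t) (𝓝[>] 0) (𝓝 (π ^ 2 / 6 / m)) := by
  have ha' : (1 : ℝ) ≤ a := by exact_mod_cast ha
  have hm' : (1 : ℝ) ≤ m := by exact_mod_cast hm
  have hz : HasSum (fun k : ℕ => 1 / ((k : ℝ) + 1) ^ 2) (π ^ 2 / 6) := by
    have := (hasSum_nat_add_iff' 1).2 hasSum_zeta_two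
    simpa using this
  have hz' : ∑' k : ℕ, 1 / ((k : ℝ) + 1) ^ 2 / m = π ^ 2 / 6 / m := (hz.div_const _).tsum_eq
  rw [← hz']
  simp_rw [apLog, ← tsum_mul_left]
  -- These follow from `1 / u ≤ (1 - exp (-u))⁻¹ ≤ 1 + 1 / u` with `u = m (k + 1) t`.
  have hbd : ∀ (k : ℕ) (t : ℝ), 0 < t →
      exp (-(a * ((k + 1) * t))) * (1 / (k + 1) ^ 2 / m) ≤
        t * (exp (-(a * ((k + 1) * t))) * (1 - exp (-(m * ((k + 1) * t))))⁻¹ / (k + 1)) ∧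
      t * (exp (-(a * ((k + 1) * t))) * (1 - exp (-(m * ((k + 1) * t))))⁻¹ / (k + 1)) ≤
        exp (-(a * ((k + 1) * t))) * (t / (k + 1) + 1 / (k + 1) ^ 2 / m) := by
    intro k t ht
    have hu : 0 < m * ((k + 1) * t) := by positivity
    have h1 := (geom_bound hu).2
    have h2 : 1 / (m * ((k + 1) * t)) ≤ (1 - exp (-(m * ((k + 1) * t))))⁻¹ := by
      rw [one_div]
      refine inv_anti₀ ?_ ?_
      · have : exp (-(m * ((k + 1) * t))) < 1 := by rw [Real.exp_lt_one_iff]; linarith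
        linarith
      · linarith [Real.add_one_le_exp (-(m * ((k + 1) * t)))]
    constructor
    · calc _ = t * (exp (-(a * ((k + 1) * t))) * (1 / (m * ((k + 1) * t))) / (k + 1)) := by
            field_simp
        _ ≤ _ := by gcongr
    · calc _ ≤ t * (exp (-(a * ((k + 1) * t))) * (1 + 1 / (m * ((k + 1) * t))) / (k + 1)) := by
            gcongr
        _ = _ := by field_simp
  refine tendsto_tsum_of_dominated_convergence (bound := fun k : ℕ => 2 * (1 / ((k : ℝ) + 1) ^ 2))
    (hz.summable.mul_left 2) (fun k => ?_) ?_
  · have hid : Tendsto (fun t : ℝ => t) (𝓝[>] 0) (𝓝 0) := nhdsWithin_le_nhds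
    have hE : Tendsto (fun t : ℝ => exp (-(a * ((k + 1) * t)))) (𝓝[>] 0) (𝓝 1) := by
      have : Continuous fun t : ℝ => exp (-(a * ((k + 1) * t))) := by fun_prop
      have := this.tendsto 0
      simp only [mul_zero, neg_zero, Real.exp_zero] at this
      exact this.mono_left nhdsWithin_le_nhds
    have hlo := hE.mul_const (1 / ((k : ℝ) + 1) ^ 2 / m)
    have hup := hE.mul ((hid.div_const ((k : ℝ) + 1)).add_const (1 / ((k : ℝ) + 1) ^ 2 / m))
    simp only [zero_div, zero_add, one_mul] at hlo hup
    refine tendsto_of_tendsto_of_tendsto_of_le_of_le' hlo hup ?_ ?_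
    · filter_upwards [self_mem_nhdsWithin] with t ht using (hbd k t ht).1
    · filter_upwards [self_mem_nhdsWithin] with t ht using (hbd k t ht).2
  · filter_upwards [self_mem_nhdsWithin] with t ht k
    have ht : 0 < t := ht
    have hk : (0 : ℝ) < k + 1 := by positivity
    obtain ⟨h1, h2⟩ := hbd k t ht
    rw [Real.norm_of_nonneg (le_trans (by positivity) h1)]
    refine h2.trans ?_
    have hE1 : exp (-(a * ((k + 1) * t))) ≤ 1 := by
      rw [Real.exp_le_one_iff, neg_nonpos]; positivity
    have hE2 : exp (-(a * ((k + 1) * t))) * t ≤ 1 / (k + 1) := by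
      rw [Real.exp_neg, le_div_iff₀ hk, mul_assoc, inv_mul_le_iff₀ (Real.exp_pos _)]
      have h3 := Real.add_one_le_exp (a * ((k + 1) * t))
      have : 0 ≤ (a - 1) * ((k + 1) * t) := mul_nonneg (by linarith) (by positivity)
      nlinarith
    have h4 : 1 / ((k : ℝ) + 1) ^ 2 / m ≤ 1 / (k + 1) ^ 2 := div_le_self (by positivity) hm'
    have h5 : exp (-(a * ((k + 1) * t))) * (1 / ((k : ℝ) + 1) ^ 2 / m) ≤ 1 / (k + 1) ^ 2 :=
      (mul_le_of_le_one_left (by positivity) hE1).trans h4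
    have h6 : exp (-(a * ((k + 1) * t))) * (t / (k + 1)) ≤ 1 / (k + 1) ^ 2 := by
      calc _ = exp (-(a * ((k + 1) * t))) * t / (k + 1) := by ring
        _ ≤ 1 / (k + 1) / (k + 1) := by gcongr
        _ = _ := by field_simp
    rw [mul_add]
    linarith

open Classical in
/-- The set `A` is the disjoint union of the progressions `a i + m q`, `q ≥ 0`, so the logarithm of
Euler's product splits accordingly. -/
theorem hasSum_log_progressions {l m : ℕ} {a : Fin l → ℕ} (hm : 1 ≤ m) (hpos : ∀ i, 1 ≤ a i)
    (hmono : StrictMono a) (ham : ∀ i, a i ≤ m) {A : Set ℕ}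
    (hA : A = {x : ℕ | 0 < x ∧ ∃ i, x % m = a i % m}) {t : ℝ} (ht : 0 < t) :
    HasSum (fun n : ℕ => if n + 1 ∈ A then -log (1 - exp (-t) ^ (n + 1)) else 0) (∑ i, apLog (a i) m t) := by
  -- The summation index `n` stands for the part `n + 1`, hence the `- 1`.
  let φ : Fin l × ℕ → ℕ := fun z => a z.1 + m * z.2 - 1
  have hφ1 : ∀ z, φ z + 1 = a z.1 + m * z.2 := fun z => by
    have := hpos z.1
    simp only [φ]; omega
  have hφ : Function.Injective φ := by
    rintro ⟨i, q⟩ ⟨i', q'⟩ h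
    have h1 : a i + m * q = a i' + m * q' := by
      have h2 := hφ1 (i, q)
      rw [h, hφ1 (i', q')] at h2
      exact h2.symm
    have hq : q = q' := by
      have := hpos i; have := hpos i'; have := ham i; have := ham i'
      rcases lt_trichotomy q q' with hlt | heq | hlt
      · have := Nat.mul_le_mul_left m (Nat.succ_le_of_lt hlt)
        rw [Nat.mul_succ] at this; omega
      · exact heq
      · have := Nat.mul_le_mul_left m (Nat.succ_le_of_lt hlt)
        rw [Nat.mul_succ] at this; omega
    subst hq
    have : i = i' := hmono.injective (by omega)
    rw [this]
  have hmem : ∀ z, φ z + 1 ∈ A := fun z => by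
    rw [hA]
    exact ⟨Nat.succ_pos _, z.1, by rw [hφ1, Nat.add_mul_mod_self_left]⟩
  refine (hφ.hasSum_iff fun n hn => ?_).1 ?_
  · rw [if_neg]
    rw [hA]
    rintro ⟨-, i, hi⟩
    apply hn
    have hle : a i ≤ n + 1 := by
      rcases (ham i).lt_or_eq with h | h
      · rw [Nat.mod_eq_of_lt h] at hi
        rw [← hi]; exact Nat.mod_le _ _
      · rw [h, Nat.mod_self] at hi
        rw [h]
        exact Nat.le_of_dvd (Nat.succ_pos _) (Nat.dvd_of_mod_eq_zero hi)
    obtain ⟨q, hq⟩ := (Nat.modEq_iff_dvd' hle).1 (show a i ≡ n + 1 [MOD m] from hi.symm)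
    refine ⟨(i, q), ?_⟩
    have := hφ1 (i, q)
    simp only at this
    omega
  · have e : ((fun n : ℕ => if n + 1 ∈ A then -log (1 - exp (-t) ^ (n + 1)) else 0) ∘ φ) =
        fun z : Fin l × ℕ => -log (1 - exp (-((a z.1 + m * z.2 : ℕ) * t))) := by
      funext z
      simp only [Function.comp]
      rw [if_pos (hmem z), hφ1, ← Real.exp_nat_mul, mul_neg]
    rw [e]
    have hrow := fun i => hasSum_apLog (hpos i) hm ht
    have hS : Summable fun z : Fin l × ℕ =>
        -log (1 - exp (-((a z.1 + m * z.2 : ℕ) * t))) := by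
      refine (summable_prod_of_nonneg fun z => ?_).2
        ⟨fun i => (hrow i).summable, (hasSum_fintype _).summable⟩
      have h1 : exp (-((a z.1 + m * z.2 : ℕ) * t)) ≤ 1 := by
        rw [Real.exp_le_one_iff, neg_nonpos]; positivity
      exact neg_nonneg.2 (Real.log_nonpos (by linarith)
        (by linarith [Real.exp_pos (-((a z.1 + m * z.2 : ℕ) * t))]))
    have := (hS.hasSum.prod_fiberwise hrow).unique (hasSum_fintype _)
    rw [← this]
    exact hS.hasSum

/-! ### The asymptotic formula -/

theorem partition_asymptotics_arith_progressions (l m : ℕ) (hl : 0 < l)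
    (a : Fin l → ℕ) (hpos : ∀ i, 1 ≤ a i) (hmono : StrictMono a)
    (ham : ∀ i, a i ≤ m) (hgcd : Nat.gcd (Finset.univ.gcd a) m = 1) :
    (fun n : ℕ => Real.log (pA {x : ℕ | 0 < x ∧ ∃ i, x % m = a i % m} n)) ~[atTop]
      (fun n : ℕ => Real.pi * Real.sqrt (2 / 3) * Real.sqrt (l * n / m)) := by
  classical
  have hm : 1 ≤ m := (hpos ⟨0, hl⟩).trans (ham _)
  have hm0 : (0 : ℝ) < m := by exact_mod_cast hm
  have hl0 : (0 : ℝ) < l := by exact_mod_cast hl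
  obtain ⟨A, hA⟩ : ∃ A, A = {x : ℕ | 0 < x ∧ ∃ i, x % m = a i % m} := ⟨_, rfl⟩
  rw [← hA]
  obtain ⟨N₀, hN₀⟩ := exists_pA_mono (A := A) (by simp [hA]) (by
    intro d hd
    have h1 : ∀ i, d ∣ a i := fun i => hd _ (by rw [hA]; exact ⟨hpos i, i, rfl⟩)
    have h2 : d ∣ m := by
      have : d ∣ a ⟨0, hl⟩ + m := hd _ (by
        rw [hA]; exact ⟨by have := hpos ⟨0, hl⟩; omega, ⟨0, hl⟩, Nat.add_mod_right _ _⟩)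
      exact (Nat.dvd_add_right (h1 _)).1 this
    exact Nat.dvd_one.1 (hgcd ▸ Nat.dvd_gcd (Finset.dvd_gcd fun i _ => h1 i) h2))
  have hlim : Tendsto (fun t => t * ∑ i, apLog (a i) m t) (𝓝[>] 0) (𝓝 (l * (π ^ 2 / 6 / m))) := by
    simp_rw [Finset.mul_sum]
    have := tendsto_finsetSum Finset.univ fun i _ => tendsto_apLog (hpos i) hm
    simpa using this
  have main := tauberian (p := fun n => (pA A n : ℝ)) (fun n => Nat.cast_nonneg _)
    (fun j n h => by exact_mod_cast hN₀ j n h) (fun t ht => by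
      have hx : exp (-t) < 1 := by rw [Real.exp_lt_one_iff]; linarith
      have h := hasSum_pA (A := A) (Real.exp_pos _).le hx
        (hasSum_log_progressions hm hpos hmono ham hA ht)
      convert! h using 3 with n
      rw [← Real.exp_nat_mul, mul_neg]) (by positivity) hlim
  set c : ℝ := 2 * √(l * (π ^ 2 / 6 / m)) with hc
  have hc0 : c ≠ 0 := by positivity
  have hce : c = π * √(2 / 3) * √(l / m) := by
    have h1 : (l : ℝ) * (π ^ 2 / 6 / m) = (π / 2) ^ 2 * ((2 / 3) * (l / m)) := by
      field_simp; norm_num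
    rw [hc, h1, Real.sqrt_mul (by positivity), Real.sqrt_sq (by positivity),
      Real.sqrt_mul (by positivity)]
    ring
  have h1 := ((isEquivalent_const_iff_tendsto hc0).2 main).mul
    (IsEquivalent.refl (u := fun n : ℕ => √(n : ℝ)) (l := atTop))
  refine (h1.congr_left ?_).congr_right ?_
  · filter_upwards [eventually_gt_atTop 0] with n hn
    have : √(n : ℝ) ≠ 0 := (Real.sqrt_pos.2 (by exact_mod_cast hn)).ne'
    simp only [Pi.mul_apply]
    field_simp
  · refine Eventually.of_forall fun n => ?_
    simp only [Pi.mul_apply, Function.const_apply]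
    rw [hce, mul_assoc (π * √(2 / 3)), ← Real.sqrt_mul (by positivity)]
    congr 2
    ring
end
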